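/- Let E₁, …, E_m be a chain of word equations on three unknowns, i.e., a sequence of nontrivial equations with Sol(E₁) ⊋ Sol(E₁, E₂) ⊋ ⋯ ⊋ Sol(E₁, …, E_m). Then there exist two unknowns x, y ∈ Ξ such that m ≤ (|E₁|_x + |E₁|_y)² + 5. -/

import Mathlib

open Polynomial

/-- The characteristic polynomial `P(w)` of a word. -/
noncomputable def wordPoly (w : List ℕ) : Polynomial ℤ :=
  ∑ i ∈ Finset.range w.length, Polynomial.C (w.getD i 0 : ℤ) * Polynomial.X ^ i

/-- Application of a morphism (given by the images of the unknowns) to a word. -/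
def mApply {n : ℕ} {β : Type*} (h : Fin n → List β) (w : List (Fin n)) : List β :=
  (w.map h).flatten

/-- The morphism maps every unknown to a word over the alphabet `A`. -/
def IntoAlph {n : ℕ} (A : Finset ℕ) (h : Fin n → List ℕ) : Prop :=
  ∀ i, ∀ a ∈ h i, a ∈ A

/-- `w` is a product of words from `A`. -/
def InStar (A : Finset (List ℕ)) (w : List ℕ) : Prop :=
  ∃ l : List (List ℕ), (∀ u ∈ l, u ∈ A) ∧ l.flatten = w

/-- The combinatorial rank of a morphism: the smallest `r` such that there is a set of
`r` words whose products contain all images of the unknowns. -/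
noncomputable def mRank {n : ℕ} (h : Fin n → List ℕ) : ℕ :=
  sInf {r | ∃ A : Finset (List ℕ), A.card = r ∧ ∀ i, InStar A (h i)}

/-- The length type of a morphism, as a rational vector. -/
def lenQ {n : ℕ} (h : Fin n → List ℕ) : Fin n → ℚ :=
  fun i => ((h i).length : ℚ)

/-- `|w|_L`: the length of the image of `w` under any morphism of length type `L`. -/
def lenL {n : ℕ} (L : Fin n → ℕ) (w : List (Fin n)) : ℕ :=
  (w.map L).sum

/-- The polynomial `Q_{E,x,L}` for the word equation `u = v`, the unknown `x` and the
length type `L`. -/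
noncomputable def eqPoly {n : ℕ} (u v : List (Fin n)) (x : Fin n) (L : Fin n → ℕ) :
    Polynomial ℤ :=
  (∑ i ∈ Finset.range u.length,
      if u.getD i x = x then (Polynomial.X : Polynomial ℤ) ^ lenL L (u.take i) else 0)
    - ∑ i ∈ Finset.range v.length,
      if v.getD i x = x then (Polynomial.X : Polynomial ℤ) ^ lenL L (v.take i) else 0

/-- Embedding of `ℤ[X]` into the field `ℚ(X)` of rational functions. -/
noncomputable def toRF (p : Polynomial ℤ) : RatFunc ℚ :=
  algebraMap (Polynomial ℚ) (RatFunc ℚ) (p.map (Int.castRingHom ℚ))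

/-!
For every `k ≥ 1` choose a morphism that solves `E₁, …, Eₖ` but not `Eₖ₊₁`. Two such morphisms
never have the same kernel, and all of them solve `E₁`, so it suffices to bound the number of
kernels that can occur.

If the images of the unknowns commute, then being a solution is a linear condition on their
lengths, which allows at most three steps. If some unknown is erased and the images do not commute,
then the kernel depends only on the erased unknown: three more steps.

In the remaining case the kernel is that of an assignment `Ξ → F₂` to the free group on `a` and `b`
in which some unknown `r` goes to `a`, another one to `b a^{e₁} b ⋯ b a^{eᵢ} b` and the third one to
`a^s b a^{f₁} b ⋯ b a^{fⱼ} b a^t`. If `E₁` is balanced, it determines `s` and `t`, and it forces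
either all `eₖ` and `fₖ` to be equal to a fixed integer or the `e`s to be absent and the `f`s to
have a fixed period, so that little more than the two degrees in `b` remains free. Hence, given the
roles of the unknowns, these assignments can be coloured with a number of colours that is linear in
`|E₁|`, such that any two assignments of one colour determine the equations solved by a third one;
a chain has at most two steps of each colour. An unbalanced `E₁ : u = v` is replaced by the balanced
equation `uv = vu`; in addition it fixes the ratio of the degrees, so that only one kernel is left
for each `r`.
-/

namespace WordEq

/-- The free group on two generators `genA` and `genB`. -/
abbrev F₂ := FreeGroup Bool

/-- The first generator of `F₂`, written `a` in the comments. -/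
def genA : F₂ := FreeGroup.of false

/-- The second generator of `F₂`, written `b` in the comments. -/
def genB : F₂ := FreeGroup.of true

/-- The product `b a^{k₁} b a^{k₂} ⋯ b a^{kₙ}` for the list `[k₁, …, kₙ]`. -/
def syllables (l : List ℤ) : F₂ := (l.map fun k ↦ genB * genA ^ k).prod

@[simp] lemma syllables_nil : syllables [] = 1 := rfl

@[simp] lemma syllables_cons (k : ℤ) (l : List ℤ) :
    syllables (k :: l) = genB * genA ^ k * syllables l := by
  simp [syllables]

lemma syllables_append (l l' : List ℤ) :
    syllables (l ++ l') = syllables l * syllables l' := by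
  simp [syllables]

/-- The permutation of `ℤ × ℤ` that translates the fibre over `0` and fixes the others. -/
def fibreShift : Multiplicative ℤ →* Equiv.Perm (ℤ × ℤ) where
  toFun c := Equiv.prodShear (Equiv.refl ℤ) fun x ↦ Equiv.addRight (if x = 0 then c.toAdd else 0)
  map_one' := by ext x <;> simp
  map_mul' c d := by
    ext x
    · simp
    · by_cases hx : x.1 = 0 <;> simp [hx]; ring

/-- The action of `F₂` on `ℤ × ℤ` in which `a` shifts the fibre over `0` and `b` moves every fibre
to the next one. -/
def fibreAction : F₂ →* Equiv.Perm (ℤ × ℤ) :=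
  FreeGroup.lift fun x ↦
    if x then (Equiv.addRight (1 : ℤ)).prodCongr (Equiv.refl ℤ) else fibreShift (.ofAdd 1)

lemma fibreAction_genA_zpow (k : ℤ) (x : ℤ × ℤ) :
    fibreAction (genA ^ k) x = (x.1, x.2 + if x.1 = 0 then k else 0) := by
  have h : fibreAction (genA ^ k) = fibreShift (.ofAdd k) := by
    rw [map_zpow, show fibreAction genA = fibreShift (.ofAdd 1) by simp [fibreAction, genA],
      ← map_zpow, ← ofAdd_zsmul, smul_eq_mul, mul_one]
  rw [h]
  rfl

lemma fibreAction_genB (x : ℤ × ℤ) : fibreAction genB x = (x.1 + 1, x.2) := by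
  simp [fibreAction, genB, Prod.map]

lemma fibreAction_syllables (l : List ℤ) {p : ℤ} (n : ℤ) (hp : p + l.length ≤ 0) :
    fibreAction (syllables l) (p, n) = (p + l.length, n) := by
  induction l with
  | nil => simp
  | cons k l ih =>
    rw [List.length_cons, Nat.cast_succ] at hp
    have h0 : p + l.length ≠ 0 := by omega
    simp only [syllables_cons, map_mul, Equiv.Perm.mul_apply, ih (by omega), fibreAction_genB,
      fibreAction_genA_zpow, if_neg h0, List.length_cons, Nat.cast_succ]
    simp [add_assoc]

lemma length_eq_and_eq_of_zpow_mul_syllables_eq {l l' : List ℤ} {c c' : ℤ}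
    (h : genA ^ c * syllables l = genA ^ c' * syllables l') : l.length = l'.length ∧ c = c' := by
  have hact (x : ℤ × ℤ) : fibreAction (genA ^ c) (fibreAction (syllables l) x) =
      fibreAction (genA ^ c') (fibreAction (syllables l') x) := by
    simpa only [map_mul, Equiv.Perm.mul_apply] using congrArg (fun g ↦ fibreAction g x) h
  have hlen : l.length = l'.length := by
    have := congrArg Prod.fst (hact (-(l.length : ℤ) - l'.length - 1, 0))
    simp only [fibreAction_genA_zpow] at this
    rw [fibreAction_syllables _ _ (by omega), fibreAction_syllables _ _ (by omega)] at this
    omega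
  refine ⟨hlen, ?_⟩
  have := congrArg Prod.snd (hact (-(l.length : ℤ), 0))
  simp only [fibreAction_genA_zpow] at this
  rw [fibreAction_syllables _ _ (by omega), fibreAction_syllables _ _ (by omega)] at this
  simpa [hlen] using this

theorem zpow_mul_syllables_inj {l l' : List ℤ} {c c' : ℤ} :
    genA ^ c * syllables l = genA ^ c' * syllables l' ↔ c = c' ∧ l = l' := by
  refine ⟨fun h ↦ ?_, by rintro ⟨rfl, rfl⟩; rfl⟩
  induction l generalizing l' c c' with
  | nil =>
    obtain ⟨hlen, hc⟩ := length_eq_and_eq_of_zpow_mul_syllables_eq h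
    exact ⟨hc, (List.length_eq_zero_iff.1 hlen.symm).symm⟩
  | cons k l ih =>
    obtain ⟨hlen, rfl⟩ := length_eq_and_eq_of_zpow_mul_syllables_eq h
    obtain ⟨k', l', rfl⟩ : ∃ k' t, l' = k' :: t :=
      List.exists_cons_of_length_pos (by rw [← hlen]; exact Nat.succ_pos _)
    simp only [syllables_cons, mul_assoc, mul_right_inj] at h
    obtain ⟨rfl, rfl⟩ := ih h
    exact ⟨rfl, rfl⟩

/-- The element `b a^{e₁} b a^{e₂} b ⋯ a^{eₙ} b` for the list `[e₁, …, eₙ]` of gaps. -/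
def gapWord (e : List ℤ) : F₂ := syllables e * genB

@[simp] lemma gapWord_nil : gapWord [] = genB := by simp [gapWord]

lemma gapWord_cons (k : ℤ) (e : List ℤ) :
    gapWord (k :: e) = genB * genA ^ k * gapWord e := by
  simp [gapWord, mul_assoc]

lemma gapWord_mul_zpow (e : List ℤ) (d : ℤ) : gapWord e * genA ^ d = syllables (e ++ [d]) := by
  simp [gapWord, syllables_append, mul_assoc]

lemma gapWord_append_cons (e f : List ℤ) (d : ℤ) :
    gapWord (e ++ d :: f) = gapWord e * genA ^ d * gapWord f := by
  simp [gapWord, syllables_append, mul_assoc]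

/-- The anti-automorphism of `F₂` that fixes both generators. -/
def reversal (g : F₂) : F₂ :=
  (FreeGroup.lift (fun x ↦ (FreeGroup.of x)⁻¹) g)⁻¹

lemma reversal_mul (g h : F₂) : reversal (g * h) = reversal h * reversal g := by simp [reversal]

@[simp] lemma reversal_one : reversal 1 = 1 := by simp [reversal]

@[simp] lemma reversal_genB : reversal genB = genB := by simp [reversal, genB]

@[simp] lemma reversal_genA : reversal genA = genA := by simp [reversal, genA]

@[simp] lemma reversal_genA_zpow (k : ℤ) : reversal (genA ^ k) = genA ^ k := by
  simp [reversal, genA]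

@[simp] lemma reversal_gapWord (e : List ℤ) : reversal (gapWord e) = gapWord e.reverse := by
  induction e with
  | nil => simp
  | cons k e ih =>
    rw [gapWord_cons, reversal_mul, reversal_mul, ih, List.reverse_cons, gapWord_append_cons]
    simp [mul_assoc]

section Evaluation

variable {Λ Λ' M N : Type*} [Monoid M] [Monoid N]

/-- The image of a word under the morphism of monoids that sends each letter `x` to `ψ x`. -/
def evalWord (ψ : Λ → M) (w : List Λ) : M := (w.map ψ).prod

@[simp] lemma evalWord_nil (ψ : Λ → M) : evalWord ψ [] = 1 := rfl

@[simp] lemma evalWord_cons (ψ : Λ → M) (x : Λ) (w : List Λ) :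
    evalWord ψ (x :: w) = ψ x * evalWord ψ w := by
  simp [evalWord]

lemma evalWord_append (ψ : Λ → M) (w w' : List Λ) :
    evalWord ψ (w ++ w') = evalWord ψ w * evalWord ψ w' := by
  simp [evalWord]

lemma evalWord_flatMap (ψ : Λ' → M) (σ : Λ → List Λ') (w : List Λ) :
    evalWord ψ (w.flatMap σ) = evalWord (fun x ↦ evalWord ψ (σ x)) w := by
  induction w with
  | nil => rfl
  | cons x w ih => rw [List.flatMap_cons, evalWord_append, ih, evalWord_cons]

lemma map_evalWord (θ : M →* N) (ψ : Λ → M) (w : List Λ) :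
    θ (evalWord ψ w) = evalWord (fun x ↦ θ (ψ x)) w := by
  simp [evalWord, map_list_prod, Function.comp_def]

lemma evalWord_reversal (ψ : Λ → F₂) (w : List Λ) :
    evalWord (fun x ↦ reversal (ψ x)) w.reverse = reversal (evalWord ψ w) := by
  induction w with
  | nil => simp
  | cons x w ih => simp [evalWord_append, ih, reversal_mul]

end Evaluation

/-- A letter of a two-letter alphabet together with the exponent of `a` that follows it. -/
abbrev Token := Bool × ℤ

/-- Replaces each token `(i, d)` by the gaps `E i` followed by `d`. -/
def expand (E : Bool → List ℤ) (U : List Token) : List ℤ := U.flatMap fun t ↦ E t.1 ++ [t.2]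

@[simp] lemma expand_nil (E : Bool → List ℤ) : expand E [] = [] := rfl

@[simp] lemma expand_cons (E : Bool → List ℤ) (t : Token) (U : List Token) :
    expand E (t :: U) = E t.1 ++ t.2 :: expand E U := by
  simp [expand]

lemma expand_flatMap {E E' : Bool → List ℤ} {τ : Token → List Token}
    (hτ : ∀ t, expand E (τ t) = E' t.1 ++ [t.2]) (U : List Token) :
    expand E (U.flatMap τ) = expand E' U := by
  rw [expand, List.flatMap_assoc]
  exact congrArg U.flatMap (funext hτ)

section Junctions

variable {Λ : Type*} (S T : Λ → ℤ) (g : Λ → Bool)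

/-- The exponent with which the image of a word starts; it is `0` for the empty word. -/
def leadExp : List Λ → ℤ
  | [] => 0
  | x :: _ => S x

@[simp] lemma leadExp_nil : leadExp S [] = 0 := rfl

@[simp] lemma leadExp_cons (x : Λ) (w : List Λ) : leadExp S (x :: w) = S x := rfl

/-- The tokens of a word under `x ↦ a^{S x} · gapWord (E (g x)) · a^{T x}`: the powers of `a` on
either side of each boundary between letters are merged. -/
def junctions : List Λ → List Token
  | [] => []
  | x :: w => (g x, T x + leadExp S w) :: junctions w

lemma map_fst_junctions (w : List Λ) : (junctions S T g w).map Prod.fst = w.map g := by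
  induction w with
  | nil => rfl
  | cons x w ih => rw [junctions, List.map_cons, List.map_cons, ih]

lemma evalWord_eq_zpow_mul_syllables (E : Bool → List ℤ) (w : List Λ) :
    evalWord (fun x ↦ genA ^ S x * gapWord (E (g x)) * genA ^ T x) w =
      genA ^ leadExp S w * syllables (expand E (junctions S T g w)) := by
  induction w with
  | nil => simp [junctions]
  | cons x w ih =>
    simp only [evalWord_cons, ih, junctions, leadExp_cons, expand_cons]
    rw [List.append_cons, syllables_append, ← gapWord_mul_zpow, zpow_add]
    simp only [mul_assoc]

lemma evalWord_eq_iff_expand_junctions_eq (E : Bool → List ℤ) (w w' : List Λ) :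
    evalWord (fun x ↦ genA ^ S x * gapWord (E (g x)) * genA ^ T x) w =
        evalWord (fun x ↦ genA ^ S x * gapWord (E (g x)) * genA ^ T x) w' ↔
      leadExp S w = leadExp S w' ∧
        expand E (junctions S T g w) = expand E (junctions S T g w') := by
  rw [evalWord_eq_zpow_mul_syllables, evalWord_eq_zpow_mul_syllables, zpow_mul_syllables_inj]

end Junctions

section TokenRelations

/-- The family of gaps with value `e` at `false` and `f` at `true`. -/
def gapPair (e f : List ℤ) (i : Bool) : List ℤ := bif i then f else e

@[simp] lemma gapPair_true (e f : List ℤ) : gapPair e f true = f := rfl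

@[simp] lemma gapPair_false (e f : List ℤ) : gapPair e f false = e := rfl

/-- The token words `(false, c) :: U` and `(true, d) :: V`, which start with different letters, are
rearrangements of each other up to exponents and have the same expansion. -/
def Clash (E : Bool → List ℤ) (c : ℤ) (U : List Token) (d : ℤ) (V : List Token) : Prop :=
  expand E ((false, c) :: U) = expand E ((true, d) :: V) ∧
    (((false, c) :: U).map Prod.fst).Perm (((true, d) :: V).map Prod.fst)

/-- There is a clash for the gaps `E`. -/
def HasClash (E : Bool → List ℤ) : Prop := ∃ c U d V, Clash E c U d V

/-- The token with the other letter and the same exponent. -/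
def Token.flip (t : Token) : Token := (!t.1, t.2)

lemma expand_map_flip (e f : List ℤ) (U : List Token) :
    expand (gapPair f e) (U.map Token.flip) = expand (gapPair e f) U := by
  induction U with
  | nil => rfl
  | cons t U ih => obtain ⟨_ | _, d⟩ := t <;> simp [Token.flip, ih]

lemma Clash.flip {e f : List ℤ} {c d : ℤ} {U V : List Token}
    (h : Clash (gapPair e f) c U d V) :
    Clash (gapPair f e) d (V.map Token.flip) c (U.map Token.flip) := by
  constructor
  · exact (expand_map_flip e f ((true, d) :: V)).trans
      (h.1.symm.trans (expand_map_flip e f ((false, c) :: U)).symm)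
  · simpa [Token.flip, Function.comp_def] using h.2.symm.map Bool.not

lemma HasClash.flip {e f : List ℤ} (h : HasClash (gapPair e f)) : HasClash (gapPair f e) := by
  obtain ⟨_, _, _, _, h⟩ := h
  exact ⟨_, _, _, _, h.flip⟩

lemma perm_map_fst_flatMap {τ : Token → List Token} {σ : Bool → List Bool}
    (hτ : ∀ t, (τ t).map Prod.fst = σ t.1) {U V : List Token}
    (h : (U.map Prod.fst).Perm (V.map Prod.fst)) :
    ((U.flatMap τ).map Prod.fst).Perm ((V.flatMap τ).map Prod.fst) := by
  have hmap (W : List Token) : (W.flatMap τ).map Prod.fst = (W.map Prod.fst).flatMap σ := by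
    rw [List.map_flatMap, List.flatMap_map]
    exact congrArg W.flatMap (funext hτ)
  rw [hmap, hmap]
  exact h.flatMap_right _

/-- The substitution of token words that inserts the token `(false, c)` before the letter `true`. -/
def insertBefore (c : ℤ) (t : Token) : List Token :=
  bif t.1 then [(false, c), (true, t.2)] else [t]

/-- The substitution of token words that inserts the letter `false` after the letter `true`, which
then carries the exponent `c`. -/
def insertAfter (c : ℤ) (t : Token) : List Token :=
  bif t.1 then [(true, c), (false, t.2)] else [t]

lemma expand_flatMap_insertBefore (e f : List ℤ) (c : ℤ) (U : List Token) :
    expand (gapPair e f) (U.flatMap (insertBefore c)) = expand (gapPair e (e ++ c :: f)) U :=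
  expand_flatMap (by rintro ⟨_ | _, d⟩ <;> simp [insertBefore]) U

lemma expand_flatMap_insertAfter (e f : List ℤ) (c : ℤ) (U : List Token) :
    expand (gapPair e f) (U.flatMap (insertAfter c)) = expand (gapPair e (f ++ c :: e)) U :=
  expand_flatMap (by rintro ⟨_ | _, d⟩ <;> simp [insertAfter]) U

lemma Clash.exists_eq_append_cons {e f : List ℤ} {c d : ℤ} {U V : List Token}
    (h : Clash (gapPair e f) c U d V) (hlen : e.length < f.length) :
    ∃ f', f = e ++ c :: f' := by
  have he : e ++ [c] <+: expand (gapPair e f) ((true, d) :: V) := by rw [← h.1]; simp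
  obtain ⟨f', hf'⟩ := List.prefix_of_prefix_length_le he
    (show f <+: expand (gapPair e f) ((true, d) :: V) by simp) (by simpa using hlen)
  exact ⟨f', by rw [← hf', List.append_assoc, List.singleton_append]⟩

lemma Clash.cancel_left {e f' : List ℤ} {c d : ℤ} {U V : List Token}
    (h : Clash (gapPair e (e ++ c :: f')) c U d V) :
    ∃ c' U' V', Clash (gapPair e f') c' U' d V' := by
  obtain ⟨heq, hperm⟩ := h
  have hperm' := perm_map_fst_flatMap (τ := insertBefore c)
    (σ := fun b ↦ bif b then [false, true] else [b])
    (by rintro ⟨_ | _, z⟩ <;> simp [insertBefore]) hperm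
  rw [← expand_flatMap_insertBefore, ← expand_flatMap_insertBefore] at heq
  simp only [List.flatMap_cons, insertBefore, cond_true, cond_false, List.cons_append,
    List.nil_append, expand_cons, List.append_cancel_left_eq, List.cons.injEq, true_and,
    List.map_cons, List.perm_cons] at heq hperm'
  cases U with
  | nil =>
    have hmem : true ∈ [false] := hperm.symm.subset List.mem_cons_self
    simp at hmem
  | cons t U =>
    obtain ⟨_ | _, z⟩ := t
    · exact ⟨z, U.flatMap (insertBefore c), V.flatMap (insertBefore c),
        by simpa [insertBefore] using heq, by simpa [insertBefore] using hperm'⟩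
    · exact ⟨c, (true, z) :: U.flatMap (insertBefore c), V.flatMap (insertBefore c),
        by simpa [insertBefore] using heq, by simpa [insertBefore] using hperm'⟩

lemma Clash.hasClash_cancel_left {e f' : List ℤ} {c d : ℤ} {U V : List Token}
    (h : Clash (gapPair e (e ++ c :: f')) c U d V) : HasClash (gapPair e f') := by
  obtain ⟨_, _, _, h'⟩ := h.cancel_left
  exact ⟨_, _, _, _, h'⟩

lemma Clash.cancel_right {e f' : List ℤ} {c d z : ℤ} {U V : List Token}
    (h : Clash (gapPair e (f' ++ z :: e)) c U d V) : HasClash (gapPair e f') := by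
  obtain ⟨heq, hperm⟩ := h
  have hperm' := perm_map_fst_flatMap (τ := insertAfter z)
    (σ := fun b ↦ bif b then [true, false] else [b])
    (by rintro ⟨_ | _, z⟩ <;> simp [insertAfter]) hperm
  rw [← expand_flatMap_insertAfter, ← expand_flatMap_insertAfter] at heq
  exact ⟨c, U.flatMap (insertAfter z), z, (false, d) :: V.flatMap (insertAfter z),
    by simpa [insertAfter] using heq, by simpa [insertAfter] using hperm'⟩

lemma eq_replicate_of_append_singleton_eq_cons {α : Type*} {e : List α} {c c' : α}
    (h : e ++ [c] = c' :: e) : c = c' ∧ e = List.replicate e.length c := by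
  induction e generalizing c' with
  | nil => simpa using h
  | cons x e ih =>
    rw [List.cons_append, List.cons.injEq] at h
    obtain ⟨rfl, h⟩ := h
    obtain ⟨rfl, he⟩ := ih h
    exact ⟨rfl, by rw [List.length_cons, List.replicate_succ, ← he]⟩

lemma eq_of_replicate_append_cons_comm {α : Type*} {x c d : α} {i j : ℕ} (hij : i ≠ j)
    (h : List.replicate i x ++ c :: List.replicate j x =
      List.replicate j x ++ d :: List.replicate i x) : c = x := by
  have hi := congrArg (·[i]?) h
  simp only [List.getElem?_append, List.length_replicate, lt_irrefl, if_false, Nat.sub_self,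
    List.getElem?_cons, List.getElem?_replicate] at hi
  split_ifs at hi <;> first | omega | exact Option.some.inj hi

lemma eq_replicate_of_append_cons {α : Type*} {e f g : List α} {c d x y : α} (he : e ≠ [])
    (hlen : e.length ≠ g.length) (hf : f = e ++ c :: g) {g' : List α} (hf' : f = g' ++ d :: e)
    (hx : e = List.replicate e.length x ∧ g = List.replicate g.length x)
    (hy : e = List.replicate e.length y ∧ g' = List.replicate g'.length y) :
    f = List.replicate f.length x := by
  have hgg' : g.length = g'.length := by
    have := congrArg List.length (hf.symm.trans hf')
    simp only [List.length_append, List.length_cons] at this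
    omega
  obtain rfl : x = y := by
    rcases (List.replicate_inj.1 (hx.1.symm.trans hy.1)).2 with h | h
    · exact absurd (List.length_eq_zero_iff.1 h) he
    · exact h
  obtain rfl : g = g' := by rw [hx.2, hy.2, hgg']
  obtain rfl : c = x := eq_of_replicate_append_cons_comm (d := d) hlen
    (by rw [← hx.1, ← hx.2, ← hf, ← hf'])
  refine List.eq_replicate_iff.2 ⟨rfl, fun z hz ↦ ?_⟩
  rw [hf, List.mem_append, List.mem_cons, hx.1, hx.2] at hz
  rcases hz with hz | hz | hz
  exacts [List.eq_of_mem_replicate hz, hz, List.eq_of_mem_replicate hz]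

lemma coprime_succ_of_length_eq_append_cons {α : Type*} {e f g : List α} {c : α}
    (h : Nat.Coprime (e.length + 1) (f.length + 1)) (hf : f = e ++ c :: g) :
    Nat.Coprime (e.length + 1) (g.length + 1) := by
  have hlen : f.length + 1 = (g.length + 1) + (e.length + 1) := by
    rw [hf, List.length_append, List.length_cons]
    omega
  rwa [hlen, Nat.coprime_add_self_right] at h

theorem eq_replicate_of_hasClash {e f : List ℤ} (he : e ≠ []) (hf : f ≠ [])
    (hco : Nat.Coprime (e.length + 1) (f.length + 1)) (hleft : HasClash (gapPair e f))
    (hright : HasClash (gapPair e.reverse f.reverse)) :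
    ∃ c, e = List.replicate e.length c ∧ f = List.replicate f.length c := by
  induction hn : e.length + f.length using Nat.strong_induction_on generalizing e f with
  | _ n ih =>
  subst hn
  have he0 := List.length_pos_iff.2 he
  wlog hlt : e.length < f.length generalizing e f
  · have hne : e.length ≠ f.length := fun h ↦ by
      rw [h, Nat.coprime_self] at hco
      omega
    obtain ⟨c, hf', he'⟩ := this hf he hco.symm hleft.flip hright.flip
      (by rwa [Nat.add_comm]) (List.length_pos_iff.2 hf) (by omega)
    exact ⟨c, he', hf'⟩
  obtain ⟨c, U, d, V, hleft⟩ := hleft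
  obtain ⟨c', U', d', V', hright⟩ := hright
  obtain ⟨g, hg⟩ := hleft.exists_eq_append_cons hlt
  obtain ⟨g', hg'⟩ := hright.exists_eq_append_cons (by simpa using hlt)
  obtain ⟨g', rfl⟩ : ∃ l : List ℤ, g' = l.reverse := ⟨_, g'.reverse_reverse.symm⟩
  have hfg' : f = g' ++ c' :: e := by simpa using congrArg List.reverse hg'
  have hlen : f.length = e.length + g.length + 1 := by rw [hg]; simp; omega
  have hlen' : f.length = e.length + g'.length + 1 := by rw [hfg']; simp; omega
  rcases eq_or_ne g [] with rfl | hg0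
  · obtain rfl : g' = [] := List.length_eq_zero_iff.1 (by simp at hlen; omega)
    obtain ⟨rfl, hec⟩ := eq_replicate_of_append_singleton_eq_cons (hg.symm.trans hfg')
    exact ⟨c, hec, by rw [hlen, hfg', hec]; simp [List.replicate_succ]⟩
  have hco' := coprime_succ_of_length_eq_append_cons hco hg
  have hg'0 : g' ≠ [] := by
    rintro rfl
    exact hg0 (List.length_eq_zero_iff.1 (by simp at hlen'; omega))
  obtain ⟨x, hx⟩ := ih _ (by omega) he hg0 hco'
    (hg ▸ hleft).hasClash_cancel_left
    (Clash.cancel_right (by rw [hg] at hright; simpa using hright)) rfl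
  obtain ⟨y, hy⟩ := ih _ (by omega) he hg'0 (by rwa [show g'.length = g.length by omega])
    (hfg' ▸ hleft).cancel_right
    (hg' ▸ hright).hasClash_cancel_left rfl
  have hne : e.length ≠ g.length := fun h ↦ by
    rw [h, Nat.coprime_self] at hco'
    omega
  exact ⟨x, hx.1, eq_replicate_of_append_cons he hne hg hfg' hx hy⟩

theorem Clash.eq_and_eq_of_replicate {x : ℤ} {i j : ℕ} (hi : i ≠ 0) (hj : j ≠ 0)
    (hco : Nat.Coprime (i + 1) (j + 1)) {c d : ℤ} {U V : List Token}
    (h : Clash (gapPair (List.replicate i x) (List.replicate j x)) c U d V) : c = x ∧ d = x := by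
  induction hn : i + j using Nat.strong_induction_on generalizing i j c d U V with
  | _ n ih =>
  subst hn
  wlog hlt : i < j generalizing i j c d U V
  · have hne : i ≠ j := fun h ↦ by
      rw [h, Nat.coprime_self] at hco
      omega
    exact (this hj hi hco.symm h.flip (by rwa [Nat.add_comm]) (by omega)).symm
  obtain ⟨g, hg⟩ := h.exists_eq_append_cons (by simpa using hlt)
  rw [hg] at h
  obtain ⟨-, hmem⟩ := List.eq_replicate_iff.1 hg.symm
  refine ⟨hmem c (by simp), ?_⟩
  obtain ⟨c', U', V', h'⟩ := h.cancel_left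
  obtain ⟨k, hk⟩ : ∃ k, g = List.replicate k x :=
    ⟨_, List.eq_replicate_iff.2 ⟨rfl, fun z hz ↦ hmem z (by simp [hz])⟩⟩
  subst hk
  rcases eq_or_ne k 0 with rfl | hk
  · obtain ⟨i, rfl⟩ := Nat.exists_eq_succ_of_ne_zero hi
    have heq := h'.1
    simp only [expand_cons, gapPair_false, gapPair_true, List.replicate_succ, List.replicate_zero,
      List.cons_append, List.nil_append, List.cons.injEq] at heq
    exact heq.1.symm
  · have hjk : (List.replicate j x).length = _ := congrArg List.length hg
    have hco' := coprime_succ_of_length_eq_append_cons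
      (by simpa only [List.length_replicate] using hco) hg
    simp only [List.length_append, List.length_cons, List.length_replicate] at hjk hco'
    exact (ih _ (by omega) hi hk hco' h' rfl).2

/-- The exponents of the initial run of tokens with letter `false`. -/
def initialRun (U : List Token) : List ℤ := (U.takeWhile fun t ↦ !t.1).map Prod.snd

@[simp] lemma initialRun_cons_false (c : ℤ) (U : List Token) :
    initialRun ((false, c) :: U) = c :: initialRun U := by
  simp [initialRun]

@[simp] lemma initialRun_cons_true (c : ℤ) (U : List Token) :
    initialRun ((true, c) :: U) = [] := by
  simp [initialRun]

lemma length_initialRun_le (U : List Token) :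
    (initialRun U).length ≤ (U.map Prod.fst).count false := by
  induction U with
  | nil => simp [initialRun]
  | cons t U ih => obtain ⟨_ | _, z⟩ := t <;> simp [ih]

lemma initialRun_append_prefix_expand (f : List ℤ) {U : List Token}
    (h : true ∈ U.map Prod.fst) : initialRun U ++ f <+: expand (gapPair [] f) U := by
  induction U with
  | nil => simp at h
  | cons t U ih =>
    obtain ⟨_ | _, z⟩ := t
    · simpa using ih (by simpa using h)
    · simp

lemma Clash.prefix_initialRun_append {f : List ℤ} {c d : ℤ} {U V : List Token}
    (h : Clash (gapPair [] f) c U d V) : f <+: initialRun ((false, c) :: U) ++ f := by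
  have hrun := initialRun_append_prefix_expand f
    (U := (false, c) :: U) (h.2.symm.subset List.mem_cons_self)
  rw [h.1] at hrun
  exact List.prefix_of_prefix_length_le (by simp) hrun (by simp; omega)

end TokenRelations

section Endomorphisms

/-- The endomorphism of `F₂` with `a ↦ A` and `b ↦ B`. -/
def substHom (A B : F₂) : F₂ →* F₂ := FreeGroup.lift fun x ↦ bif x then B else A

@[simp] lemma substHom_genA (A B : F₂) : substHom A B genA = A := by simp [substHom, genA]

@[simp] lemma substHom_genB (A B : F₂) : substHom A B genB = B := by simp [substHom, genB]

lemma substHom_injective {A B : F₂} (A' B' : F₂) (hA : substHom A' B' A = genA)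
    (hB : substHom A' B' B = genB) : Function.Injective (substHom A B) := by
  have hid : (substHom A' B').comp (substHom A B) = MonoidHom.id F₂ :=
    FreeGroup.ext_hom _ _ fun x ↦ match x with
      | false => (congrArg _ (substHom_genA A B)).trans hA
      | true => (congrArg _ (substHom_genB A B)).trans hB
  exact Function.LeftInverse.injective (DFunLike.congr_fun hid)

/-- The automorphism of `F₂` with `a ↦ a` and `b ↦ aˢ b aᵗ`. -/
def shiftHom (s t : ℤ) : F₂ →* F₂ := substHom genA (genA ^ s * genB * genA ^ t)

@[simp] lemma shiftHom_genA (s t : ℤ) : shiftHom s t genA = genA := substHom_genA _ _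

@[simp] lemma shiftHom_genB (s t : ℤ) : shiftHom s t genB = genA ^ s * genB * genA ^ t :=
  substHom_genB _ _

lemma shiftHom_injective (s t : ℤ) : Function.Injective (shiftHom s t) :=
  substHom_injective genA (genA ^ (-s) * genB * genA ^ (-t)) (by simp) (by simp [mul_assoc])

lemma shiftHom_gapWord (s t : ℤ) (e : List ℤ) :
    shiftHom s t (gapWord e) = genA ^ s * gapWord (e.map (· + (s + t))) * genA ^ t := by
  induction e with
  | nil => simp
  | cons k e ih =>
    rw [gapWord_cons, map_mul, ih, List.map_cons, gapWord_cons, map_mul, map_zpow, shiftHom_genA,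
      shiftHom_genB, show k + (s + t) = t + k + s by ring]
    simp only [zpow_add, mul_assoc]

lemma substHom_inv_gapWord (e : List ℤ) :
    substHom genA⁻¹ genB (gapWord e) = gapWord (e.map (-·)) := by
  induction e with
  | nil => simp
  | cons k e ih => rw [gapWord_cons, map_mul, ih, List.map_cons, gapWord_cons]; simp

lemma gapWord_replicate_zero (n : ℕ) : gapWord (List.replicate n 0) = genB ^ (n + 1) := by
  induction n with
  | zero => simp
  | succ n ih => rw [List.replicate_succ, gapWord_cons, ih, pow_succ' genB (n + 1)]; simp

lemma gapWord_replicate_neg_one (n : ℕ) :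
    gapWord (List.replicate n (-1)) = genB * (genA⁻¹ * genB) ^ n := by
  induction n with
  | zero => simp
  | succ n ih => rw [List.replicate_succ, gapWord_cons, ih, pow_succ']; simp [mul_assoc]

end Endomorphisms

section Degree

/-- `g` is of the form `a^c b a^{k₁} b ⋯ b a^{kₙ}`, with `n` occurrences of `b` and none of its
inverse. -/
def HasDegree (n : ℕ) (g : F₂) : Prop :=
  ∃ (c : ℤ) (l : List ℤ), g = genA ^ c * syllables l ∧ l.length = n

lemma hasDegree_genA_zpow (k : ℤ) : HasDegree 0 (genA ^ k) := ⟨k, [], by simp, rfl⟩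

lemma hasDegree_genA : HasDegree 0 genA := by simpa using hasDegree_genA_zpow 1

lemma hasDegree_genA_inv : HasDegree 0 genA⁻¹ := by simpa using hasDegree_genA_zpow (-1)

lemma hasDegree_genB : HasDegree 1 genB := ⟨0, [0], by simp, rfl⟩

lemma HasDegree.mul {m n : ℕ} {g h : F₂} (hg : HasDegree m g) (hh : HasDegree n h) :
    HasDegree (m + n) (g * h) := by
  obtain ⟨c, l, rfl, rfl⟩ := hg
  obtain ⟨d, k, rfl, rfl⟩ := hh
  rcases List.eq_nil_or_concat l with rfl | ⟨l, z, rfl⟩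
  · exact ⟨c + d, k, by simp [zpow_add, mul_assoc], by simp⟩
  · exact ⟨c, l ++ [z + d] ++ k, by simp [syllables_append, zpow_add, mul_assoc], by simp; omega⟩

lemma HasDegree.pow {m : ℕ} {g : F₂} (hg : HasDegree m g) (k : ℕ) :
    HasDegree (m * k) (g ^ k) := by
  induction k with
  | zero => simpa using hasDegree_genA_zpow 0
  | succ k ih => rw [pow_succ]; exact ih.mul hg

lemma HasDegree.exists_eq {n : ℕ} {g : F₂} (h : HasDegree n g) (hn : 0 < n) :
    ∃ (s : ℤ) (e : List ℤ) (t : ℤ), g = genA ^ s * gapWord e * genA ^ t ∧ e.length + 1 = n := by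
  obtain ⟨c, l, rfl, rfl⟩ := h
  rcases List.eq_nil_or_concat l with rfl | ⟨l, z, rfl⟩
  · simp at hn
  · exact ⟨c, l, z, by rw [mul_assoc, gapWord_mul_zpow]; simp, by simp⟩

lemma exists_hasDegree_substHom_gapWord_of_nonneg {e : List ℤ} (h : ∀ k ∈ e, 0 ≤ k) :
    ∃ n, HasDegree n (substHom (genA⁻¹ * genB) genA (gapWord e)) := by
  induction e with
  | nil => exact ⟨0, by simpa using hasDegree_genA⟩
  | cons k e ih =>
    rw [List.forall_mem_cons] at h
    obtain ⟨n, hn⟩ := ih h.2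
    obtain ⟨m, rfl⟩ := Int.eq_ofNat_of_zero_le h.1
    rw [gapWord_cons, map_mul, map_mul, map_zpow, substHom_genA, substHom_genB, zpow_natCast]
    exact ⟨_, (hasDegree_genA.mul ((hasDegree_genA_inv.mul hasDegree_genB).pow m)).mul hn⟩

lemma exists_hasDegree_substHom_gapWord_of_nonpos {e : List ℤ} (h : ∀ k ∈ e, k ≤ 0) :
    ∃ n, HasDegree n (substHom genB⁻¹ genA (gapWord e)) := by
  induction e with
  | nil => exact ⟨0, by simpa using hasDegree_genA⟩
  | cons k e ih =>
    rw [List.forall_mem_cons] at h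
    obtain ⟨n, hn⟩ := ih h.2
    obtain ⟨m, rfl⟩ := Int.exists_eq_neg_ofNat h.1
    rw [gapWord_cons, map_mul, map_mul, map_zpow, substHom_genA, substHom_genB, inv_zpow', neg_neg,
      zpow_natCast]
    exact ⟨_, (hasDegree_genA.mul (hasDegree_genB.pow m)).mul hn⟩

end Degree

/-- `x`, `y`, `z` are the three unknowns in some order. -/
structure IsLabelling (x y z : Fin 3) : Prop where
  ne₁₂ : x ≠ y
  ne₁₃ : x ≠ z
  ne₂₃ : y ≠ z

namespace IsLabelling

variable {x y z : Fin 3}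

lemma swap₂₃ (h : IsLabelling x y z) : IsLabelling x z y := ⟨h.ne₁₃, h.ne₁₂, h.ne₂₃.symm⟩

lemma rotate (h : IsLabelling x y z) : IsLabelling z x y := ⟨h.ne₁₃.symm, h.ne₂₃.symm, h.ne₁₂⟩

lemma eq_or_eq_or_eq (h : IsLabelling x y z) (l : Fin 3) : l = x ∨ l = y ∨ l = z := by
  obtain ⟨h₁, h₂, h₃⟩ := h
  revert x y z l
  decide

lemma forall_iff (h : IsLabelling x y z) {P : Fin 3 → Prop} : (∀ l, P l) ↔ P x ∧ P y ∧ P z := by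
  refine ⟨fun H ↦ ⟨H x, H y, H z⟩, fun ⟨hx, hy, hz⟩ l ↦ ?_⟩
  rcases h.eq_or_eq_or_eq l with rfl | rfl | rfl <;> assumption

lemma funext_iff (h : IsLabelling x y z) {β : Type*} {φ ψ : Fin 3 → β} :
    φ = ψ ↔ φ x = ψ x ∧ φ y = ψ y ∧ φ z = ψ z := by
  rw [_root_.funext_iff, h.forall_iff]

end IsLabelling

/-- The assignment `ψ` sends `r` to `a` and the other two unknowns `p`, `q` to elements of coprime
positive degrees. -/
def IsStandardAt (ψ : Fin 3 → F₂) (r p q : Fin 3) : Prop :=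
  IsLabelling r p q ∧ ψ r = genA ∧ ∃ i j : ℕ,
    HasDegree i (ψ p) ∧ HasDegree j (ψ q) ∧ 0 < i ∧ 0 < j ∧ Nat.Coprime i j

lemma IsStandardAt.swap {ψ : Fin 3 → F₂} {r p q : Fin 3} (h : IsStandardAt ψ r p q) :
    IsStandardAt ψ r q p := by
  obtain ⟨hl, hr, i, j, hp, hq, hi, hj, hco⟩ := h
  exact ⟨hl.swap₂₃, hr, j, i, hq, hp, hj, hi, hco.symm⟩

/-- Up to an injective endomorphism of `F₂`, the assignment `ψ` sends one unknown to `a` and the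
other two to elements of coprime positive degrees. -/
def HasStandardImage (ψ : Fin 3 → F₂) : Prop :=
  ∃ θ : F₂ →* F₂, Function.Injective θ ∧ ∃ r p q, IsStandardAt (fun l ↦ θ (ψ l)) r p q

lemma HasStandardImage.of_map {ψ : Fin 3 → F₂} {θ : F₂ →* F₂} (hθ : Function.Injective θ)
    (h : HasStandardImage fun l ↦ θ (ψ l)) : HasStandardImage ψ := by
  obtain ⟨η, hη, h⟩ := h
  exact ⟨η.comp θ, hη.comp hθ, h⟩

lemma forall_mem_of_prefix_append {α : Type*} {P : α → Prop} {C f : List α} (h : f <+: C ++ f)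
    (hC : C ≠ []) (hP : ∀ c ∈ C, P c) : ∀ k ∈ f, P k := by
  have hpos := List.length_pos_iff.2 hC
  suffices H : ∀ (n : ℕ) (hn : n < f.length), P f[n] by
    intro k hk
    obtain ⟨n, hn, rfl⟩ := List.mem_iff_getElem.1 hk
    exact H n hn
  intro n
  induction n using Nat.strong_induction_on with
  | _ n ih =>
    intro hn
    rw [h.getElem hn, List.getElem_append]
    split_ifs with hnC
    · exact hP _ (List.getElem_mem _)
    · exact ih _ (by omega) _

lemma exists_eq_append_cons_of_ne {α : Type*} {u v : List α} (hlen : u.length = v.length)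
    (hne : u ≠ v) : ∃ w a b u' v', u = w ++ a :: u' ∧ v = w ++ b :: v' ∧ a ≠ b := by
  induction u generalizing v with
  | nil => exact absurd (List.length_eq_zero_iff.1 hlen.symm).symm hne
  | cons x u ih =>
    cases v with
    | nil => exact absurd hlen (Nat.succ_ne_zero _)
    | cons y v =>
    rcases eq_or_ne x y with rfl | hxy
    · obtain ⟨w, a, b, u', v', rfl, rfl, hab⟩ :=
        ih (Nat.succ_injective hlen) fun h ↦ hne (congrArg _ h)
      exact ⟨x :: w, a, b, u', v', rfl, rfl, hab⟩
    · exact ⟨[], x, y, u, v, rfl, rfl, hxy⟩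

lemma forall_mem_junctions {Λ : Type*} {S T : Λ → ℤ} {g : Λ → Bool} {P : Bool → ℤ → Prop}
    (h : ∀ l w, P (g l) (T l + leadExp S w)) (w : List Λ) :
    ∀ t ∈ junctions S T g w, P t.1 t.2 := by
  induction w with
  | nil => simp [junctions]
  | cons x w ih => exact List.forall_mem_cons.2 ⟨h x w, ih⟩

lemma mem_of_mem_initialRun {U : List Token} {c : ℤ} (h : c ∈ initialRun U) : (false, c) ∈ U := by
  induction U with
  | nil => simp [initialRun] at h
  | cons t U ih =>
    obtain ⟨_ | _, d⟩ := t
    · rw [initialRun_cons_false, List.mem_cons] at h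
      exact h.elim (fun hc ↦ by simp [hc]) fun hc ↦ List.mem_cons_of_mem _ (ih hc)
    · simp at h

lemma Clash.forall_mem_of_left_nil {f : List ℤ} {c d : ℤ} {U V : List Token}
    (h : Clash (gapPair [] f) c U d V) {P : ℤ → Prop}
    (hP : ∀ t ∈ (false, c) :: U, t.1 = false → P t.2) : ∀ k ∈ f, P k :=
  forall_mem_of_prefix_append h.prefix_initialRun_append (by simp) fun _ hk ↦
    hP _ (mem_of_mem_initialRun hk) rfl

lemma Clash.forall_mem_of_right_nil {e : List ℤ} {c d : ℤ} {U V : List Token}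
    (h : Clash (gapPair e []) c U d V) {P : ℤ → Prop}
    (hP : ∀ t ∈ (true, d) :: V, t.1 = true → P t.2) : ∀ k ∈ e, P k := by
  refine h.flip.forall_mem_of_left_nil fun t ht ht₁ ↦ ?_
  obtain ⟨t', ht', rfl⟩ := List.mem_map.1
    (show t ∈ ((true, d) :: V).map Token.flip from ht)
  exact hP t' ht' (by simpa [Token.flip] using ht₁)

/-- The images of `x`, `z` are `gapWord e`, `aˢ · gapWord f · aᵗ`, and that of `y` differs from
that of `z` by a final `a`. -/
structure TwinForm (ψ : Fin 3 → F₂) (x y z : Fin 3) (e f : List ℤ) (s t : ℤ) : Prop where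
  isLabelling : IsLabelling x y z
  map_x : ψ x = gapWord e
  map_z : ψ z = genA ^ s * gapWord f * genA ^ t
  map_y : ψ y = ψ z * genA

namespace TwinForm

variable {ψ : Fin 3 → F₂} {x y z : Fin 3} {e f : List ℤ} {s t : ℤ}

lemma swap (h : TwinForm ψ x y z e f s t) :
    TwinForm (fun l ↦ substHom genA⁻¹ genB (ψ l)) x z y (e.map (-·)) (f.map (-·)) (-s)
      (-t - 1) where
  isLabelling := h.isLabelling.swap₂₃
  map_x := by rw [h.map_x, substHom_inv_gapWord]
  map_z := by
    simp only [h.map_y, h.map_z, map_mul, map_zpow, substHom_genA, substHom_inv_gapWord, inv_zpow',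
      mul_assoc, zpow_sub, zpow_one]
  map_y := by simp [h.map_y]

/-- The exponent of `a` in front of `gapWord` in the image of an unknown under a `TwinForm`. -/
def leftExp (x : Fin 3) (s : ℤ) (l : Fin 3) : ℤ := if l = x then 0 else s

/-- The exponent of `a` after `gapWord` in the image of an unknown under a `TwinForm`. -/
def rightExp (x y : Fin 3) (t : ℤ) (l : Fin 3) : ℤ :=
  if l = x then 0 else if l = y then t + 1 else t

@[simp] lemma leftExp_self (x : Fin 3) (s : ℤ) : leftExp x s x = 0 := if_pos rfl

@[simp] lemma rightExp_self (x y : Fin 3) (t : ℤ) : rightExp x y t x = 0 := if_pos rfl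

lemma leftExp_of_ne {l : Fin 3} (hl : l ≠ x) : leftExp x s l = s := if_neg hl

lemma rightExp_of_ne {l : Fin 3} (hl : l ≠ x) :
    rightExp x y t l = t ∨ rightExp x y t l = t + 1 := by
  rw [rightExp, if_neg hl]
  split_ifs <;> simp

lemma leadExp_leftExp (w : List (Fin 3)) : leadExp (leftExp x s) w = 0 ∨
    leadExp (leftExp x s) w = s := by
  cases w with
  | nil => simp
  | cons l w => by_cases h : l = x <;> simp [leftExp, h]

lemma leadExp_rightExp (w : List (Fin 3)) : leadExp (rightExp x y t) w = 0 ∨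
    leadExp (rightExp x y t) w = t ∨ leadExp (rightExp x y t) w = t + 1 := by
  cases w with
  | nil => simp
  | cons l w =>
    rcases eq_or_ne l x with rfl | hl
    · simp
    · exact .inr (rightExp_of_ne hl)

lemma eq_conj_gapWord (h : TwinForm ψ x y z e f s t) :
    ψ = fun l ↦ genA ^ leftExp x s l * gapWord (gapPair e f (l != x)) *
      genA ^ rightExp x y t l := by
  obtain ⟨hl, hx, hz, hy⟩ := h
  have hyx : (y != x) = true := bne_iff_ne.2 hl.ne₁₂.symm
  have hzx : (z != x) = true := bne_iff_ne.2 hl.ne₁₃.symm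
  refine hl.funext_iff.2 ⟨by simp [hx], ?_, ?_⟩
  · simp [leftExp, rightExp, hl.ne₁₂.symm, hyx, hy, hz, zpow_add, mul_assoc]
  · simp [leftExp, rightExp, hl.ne₁₃.symm, hl.ne₂₃.symm, hzx, hz]

lemma reversal_eq_conj_gapWord (h : TwinForm ψ x y z e f s t) :
    (fun l ↦ reversal (ψ l)) = fun l ↦ genA ^ rightExp x y t l *
      gapWord (gapPair e.reverse f.reverse (l != x)) * genA ^ leftExp x s l := by
  funext l
  rw [congrFun h.eq_conj_gapWord l]
  simp only [reversal_mul, reversal_genA_zpow, reversal_gapWord, mul_assoc]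
  cases l != x <;> rfl

lemma leadExp_eq_and_expand_eq (h : TwinForm ψ x y z e f s t) {u v : List (Fin 3)}
    (hev : evalWord ψ (y :: u) = evalWord ψ (z :: v)) :
    1 + leadExp (leftExp x s) u = leadExp (leftExp x s) v ∧
      expand (gapPair e f) (junctions (leftExp x s) (rightExp x y t) (· != x) u) =
        expand (gapPair e f) (junctions (leftExp x s) (rightExp x y t) (· != x) v) := by
  rw [evalWord_cons, evalWord_cons, h.map_y, mul_assoc, mul_right_inj] at hev
  rw [h.eq_conj_gapWord, evalWord_eq_zpow_mul_syllables, evalWord_eq_zpow_mul_syllables,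
    ← mul_assoc, ← zpow_one_add] at hev
  exact zpow_mul_syllables_inj.1 hev

lemma clash_left (h : TwinForm ψ x y z e f s t) {l : Fin 3} {u v : List (Fin 3)}
    (hl : l ≠ x) (hperm : (y :: l :: u).Perm (z :: x :: v))
    (hev : evalWord ψ (y :: l :: u) = evalWord ψ (z :: x :: v)) :
    Clash (gapPair e f) (leadExp (leftExp x s) v)
      (junctions (leftExp x s) (rightExp x y t) (· != x) v)
      (rightExp x y t l + leadExp (leftExp x s) u)
      (junctions (leftExp x s) (rightExp x y t) (· != x) u) := by
  have hlx : (l != x) = true := bne_iff_ne.2 hl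
  constructor
  · simpa [junctions, hlx] using (h.leadExp_eq_and_expand_eq hev).2.symm
  · have hyx : (y != x) = true := bne_iff_ne.2 h.isLabelling.ne₁₂.symm
    have hzx : (z != x) = true := bne_iff_ne.2 h.isLabelling.ne₁₃.symm
    have := hperm.symm.map (· != x)
    rw [List.map_cons, hzx, List.map_cons (a := y), hyx, List.perm_cons] at this
    simpa [map_fst_junctions, hlx] using this

lemma eq_of_rightExp_eq (h : IsLabelling x y z) {l l' : Fin 3} (hl : l ≠ x) (hl' : l' ≠ x)
    (heq : rightExp x y t l = rightExp x y t l') : l = l' := by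
  rw [rightExp, rightExp, if_neg hl, if_neg hl'] at heq
  rcases h.eq_or_eq_or_eq l with rfl | rfl | rfl <;>
    rcases h.eq_or_eq_or_eq l' with rfl | rfl | rfl <;> simp_all

lemma exists_clash_right (h : TwinForm ψ x y z e f s t) {u v : List (Fin 3)}
    (hperm : (y :: u).Perm (z :: v)) (hev : evalWord ψ (y :: u) = evalWord ψ (z :: v)) :
    ∃ l u' v', l ≠ x ∧ rightExp x y t l = 0 ∧
      Clash (gapPair e.reverse f.reverse) (leadExp (rightExp x y t) u')
        (junctions (rightExp x y t) (leftExp x s) (· != x) u')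
        (leftExp x s l + leadExp (rightExp x y t) v')
        (junctions (rightExp x y t) (leftExp x s) (· != x) v') := by
  have hrev := (List.reverse_perm _).trans (hperm.trans (List.reverse_perm _).symm)
  have hevr : evalWord (fun l ↦ reversal (ψ l)) (y :: u).reverse =
      evalWord (fun l ↦ reversal (ψ l)) (z :: v).reverse := by
    rw [evalWord_reversal, evalWord_reversal, hev]
  obtain ⟨w, l, l', u', v', hu', hv', hll'⟩ := exists_eq_append_cons_of_ne hrev.length_eq
    fun heq ↦ h.isLabelling.ne₂₃ (List.cons.inj (List.reverse_injective heq)).1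
  rw [hu', hv'] at hrev hevr
  rw [evalWord_append, evalWord_append, mul_right_inj, h.reversal_eq_conj_gapWord,
    evalWord_eq_iff_expand_junctions_eq, leadExp_cons, leadExp_cons] at hevr
  replace hrev := ((List.perm_append_left_iff w).1 hrev).map (· != x)
  rw [← map_fst_junctions (rightExp x y t) (leftExp x s),
    ← map_fst_junctions (rightExp x y t) (leftExp x s)] at hrev
  have hx : (x != x) = false := bne_self_eq_false x
  rcases eq_or_ne l x with rfl | hl
  · refine ⟨l', u', v', hll'.symm, by rw [← hevr.1, rightExp_self], ?_⟩
    have hl' : (l' != l) = true := bne_iff_ne.2 hll'.symm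
    exact ⟨by simpa [junctions, hl'] using hevr.2, by simpa [junctions, hl'] using hrev⟩
  · rcases eq_or_ne l' x with rfl | hl'
    · refine ⟨l, v', u', hl, by rw [hevr.1, rightExp_self], ?_⟩
      have hl₁ : (l != l') = true := bne_iff_ne.2 hl
      exact ⟨by simpa [junctions, hl₁] using hevr.2.symm,
        by simpa [junctions, hl₁] using hrev.symm⟩
    · exact absurd (eq_of_rightExp_eq h.isLabelling hl hl' hevr.1) hll'

lemma hasStandardImage_of_replicate_zero {i j : ℕ} (hco : Nat.Coprime (i + 1) (j + 1))
    (h : TwinForm ψ x y z (List.replicate i 0) (List.replicate j 0) (-1) 0) :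
    HasStandardImage ψ := by
  obtain ⟨hl, hx, hz, hy⟩ := h
  rw [gapWord_replicate_zero] at hx hz
  rw [zpow_neg_one, zpow_zero, mul_one] at hz
  refine ⟨substHom (genB ^ (j + 1) * genA⁻¹) genB,
    substHom_injective (genA⁻¹ * genB ^ (j + 1)) genB (by simp) (by simp),
    z, x, y, hl.rotate, by simp [hz], i + 1, j + 1, ?_, ?_, i.succ_pos, j.succ_pos, hco⟩
  · simpa [hx] using hasDegree_genB.pow (i + 1)
  · simpa [hy, hz, mul_assoc] using
      (hasDegree_genA.mul (hasDegree_genB.pow (j + 1))).mul hasDegree_genA_inv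

lemma hasStandardImage_of_replicate_neg_one {i j : ℕ} (hco : Nat.Coprime (i + 1) (j + 1))
    (h : TwinForm ψ x y z (List.replicate i (-1)) (List.replicate j (-1)) (-1) (-1)) :
    HasStandardImage ψ := by
  obtain ⟨hl, hx, hz, hy⟩ := h
  rw [gapWord_replicate_neg_one] at hx hz
  set θ := substHom (genA⁻¹ * genB ^ (j + 1)) (genA⁻¹ * genB ^ (j + 2)) with hθ
  have hθB : θ (genA⁻¹ * genB) = genB := by
    rw [map_mul, map_inv, hθ, substHom_genA, substHom_genB, pow_succ genB (j + 1)]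
    group
  have hx' : ψ x = genA * (genA⁻¹ * genB) ^ (i + 1) := by
    rw [hx, pow_succ' _ i]
    simp [mul_assoc]
  have hz' : ψ z = (genA⁻¹ * genB) ^ (j + 1) * genA⁻¹ := by
    rw [hz, pow_succ' _ j]
    simp [mul_assoc]
  have hy' : ψ y = (genA⁻¹ * genB) ^ (j + 1) := by rw [hy, hz', inv_mul_cancel_right]
  refine ⟨θ, substHom_injective ((genA⁻¹ * genB) ^ (j + 1) * genA⁻¹) (genA⁻¹ * genB) (by simp) ?_,
    z, x, y, hl.rotate, ?_, (j + 1) + (i + 1), j + 1, ?_, ?_, by omega, j.succ_pos,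
    by simpa using hco⟩
  · rw [pow_succ genB (j + 1)]
    simp [mul_assoc]
  · simp only [hz', map_mul, map_pow, hθB, map_inv]
    simp [hθ]
  · simp only [hx', map_mul, map_pow, hθB]
    rw [hθ, substHom_genA, mul_assoc, ← pow_add]
    simpa using hasDegree_genA_inv.mul (hasDegree_genB.pow ((j + 1) + (i + 1)))
  · simp only [hy', map_pow, hθB]
    simpa using hasDegree_genB.pow (j + 1)

lemma hasStandardImage_of_right_nil (h : TwinForm ψ x y z e [] (-1) t) (ht : t ≤ 0)
    (he : ∀ k ∈ e, t - 1 ≤ k) : HasStandardImage ψ := by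
  obtain ⟨hl, hx, hz, hy⟩ := h
  obtain ⟨m, rfl⟩ := Int.exists_eq_neg_ofNat ht
  obtain ⟨n, hn⟩ := exists_hasDegree_substHom_gapWord_of_nonneg
    (e := e.map (· + (1 + (m : ℤ)))) (by
      simp only [List.forall_mem_map]
      intro k hk
      have := he k hk
      omega)
  have hx' := ((hasDegree_genA_inv.mul hasDegree_genB).mul hn).mul
    ((hasDegree_genA_inv.mul hasDegree_genB).pow m)
  refine .of_map (shiftHom_injective 1 m) ⟨substHom (genA⁻¹ * genB) genA,
    substHom_injective genB (genB * genA) (by simp) (by simp), z, x, y, hl.rotate, ?_,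
    0 + 1 + n + (0 + 1) * m, 1, ?_, ?_, ?_, one_pos, Nat.coprime_one_right _⟩
  · simp [hz, mul_assoc]
  · simpa [hx, shiftHom_gapWord] using hx'
  · simpa [hy, hz, mul_assoc] using hasDegree_genB
  · omega

lemma hasStandardImage_of_left_nil (h : TwinForm ψ x y z [] f (-1) (-1))
    (hf : ∀ k ∈ f, k ≤ 0) : HasStandardImage ψ := by
  obtain ⟨hl, hx, hz, hy⟩ := h
  obtain ⟨n, hn⟩ := exists_hasDegree_substHom_gapWord_of_nonpos hf
  have hy' := hasDegree_genB.mul hn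
  refine ⟨substHom genB⁻¹ genA, substHom_injective genB genA⁻¹ (by simp) (by simp), x, y, z, hl,
    by simp [hx], _, _, ?_, ?_, ?_, ?_,
    Nat.coprime_self_add_right.2 (Nat.coprime_one_right (1 + n))⟩
  · simpa [hy, hz] using hy'
  · simpa [hz] using hy'.mul hasDegree_genB
  · omega
  · omega

variable {l l' : Fin 3} {u v u' v' : List (Fin 3)}

lemma forall_mem_sub_one_le {c : ℤ} {U : List Token} (hl : l ≠ x)
    (h : Clash (gapPair e []) c U (rightExp x y t l + leadExp (leftExp x (-1)) u)
      (junctions (leftExp x (-1)) (rightExp x y t) (· != x) u)) : ∀ k ∈ e, t - 1 ≤ k := by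
  refine h.forall_mem_of_right_nil ?_
  have hjunc := forall_mem_junctions (S := leftExp x (-1)) (T := rightExp x y t) (g := (· != x))
    (P := fun b k ↦ b = true → t - 1 ≤ k) (fun l w hl ↦ by
      rcases rightExp_of_ne (y := y) (t := t) (bne_iff_ne.1 hl) with h | h <;>
        rcases leadExp_leftExp (x := x) (s := -1) w with h' | h' <;> rw [h, h'] <;> omega) (l :: u)
  rwa [junctions, show (l != x) = true from bne_iff_ne.2 hl] at hjunc

lemma forall_mem_nonpos {d : ℤ} {V : List Token}
    (h : Clash (gapPair [] f) (leadExp (leftExp x (-1)) v)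
      (junctions (leftExp x (-1)) (rightExp x y t) (· != x) v) d V) : ∀ k ∈ f, k ≤ 0 := by
  refine h.forall_mem_of_left_nil ?_
  have hjunc := forall_mem_junctions (S := leftExp x (-1)) (T := rightExp x y t) (g := (· != x))
    (P := fun b k ↦ b = false → k ≤ 0) (fun l w hl ↦ by
      obtain rfl := bne_eq_false_iff_eq.1 hl
      rcases leadExp_leftExp (x := l) (s := -1) w with h' | h' <;> rw [rightExp_self, h'] <;>
        omega) (x :: v)
  simpa [junctions] using hjunc

lemma forall_mem_nonneg {d : ℤ} {V : List Token}
    (h : Clash (gapPair [] f) (leadExp (rightExp x y 0) u)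
      (junctions (rightExp x y 0) (leftExp x (-1)) (· != x) u) d V) : ∀ k ∈ f, 0 ≤ k := by
  refine h.forall_mem_of_left_nil ?_
  have hjunc := forall_mem_junctions (S := rightExp x y 0) (T := leftExp x (-1)) (g := (· != x))
    (P := fun b k ↦ b = false → 0 ≤ k) (fun l w hl ↦ by
      obtain rfl := bne_eq_false_iff_eq.1 hl
      rcases leadExp_rightExp (x := l) (y := y) (t := 0) w with h' | h' | h' <;>
        rw [leftExp_self, h'] <;> omega) (x :: u)
  simpa [junctions] using hjunc

lemma hasStandardImage_of_ne_nil (h : TwinForm ψ x y z e f (-1) t) (ht : t = 0 ∨ t = -1)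
    (hco : Nat.Coprime (e.length + 1) (f.length + 1)) (he : e ≠ []) (hf : f ≠ []) {d : ℤ}
    {U V U' V' : List Token} (hleft : Clash (gapPair e f) (leadExp (leftExp x (-1)) v) U d V)
    (hl : l ≠ x)
    (hright : Clash (gapPair e.reverse f.reverse) (leadExp (rightExp x y t) u') U'
      (leftExp x (-1) l + leadExp (rightExp x y t) v') V') : HasStandardImage ψ := by
  obtain ⟨c, hec, hfc⟩ := eq_replicate_of_hasClash he hf hco ⟨_, _, _, _, hleft⟩
    ⟨_, _, _, _, hright⟩
  rw [← List.length_pos_iff, Nat.pos_iff_ne_zero] at he hf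
  rw [hec, hfc] at hleft hright h
  rw [List.reverse_replicate, List.reverse_replicate] at hright
  have hc := (hleft.eq_and_eq_of_replicate he hf hco).1
  obtain ⟨hc', hc''⟩ := hright.eq_and_eq_of_replicate he hf hco
  rw [leftExp_of_ne hl] at hc''
  rcases leadExp_leftExp (x := x) (s := -1) v with hv | hv
  · obtain rfl : c = 0 := hc.symm.trans hv
    obtain rfl : t = 0 := by
      rcases leadExp_rightExp (x := x) (y := y) (t := t) v' with h | h | h <;> omega
    exact h.hasStandardImage_of_replicate_zero hco
  · obtain rfl : c = -1 := hc.symm.trans hv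
    obtain rfl : t = -1 := by
      rcases leadExp_rightExp (x := x) (y := y) (t := t) u' with h | h | h <;> omega
    exact h.hasStandardImage_of_replicate_neg_one hco

theorem hasStandardImage_of_evalWord_eq (h : TwinForm ψ x y z e f (-1) t)
    (hco : Nat.Coprime (e.length + 1) (f.length + 1)) (hl : l ≠ x)
    (hperm : (y :: l :: u).Perm (z :: x :: v))
    (hev : evalWord ψ (y :: l :: u) = evalWord ψ (z :: x :: v)) : HasStandardImage ψ := by
  have hleft := h.clash_left hl hperm hev
  obtain ⟨l', u', v', hl', hzero, hright⟩ := h.exists_clash_right hperm hev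
  have ht : t = 0 ∨ t = -1 := by
    rcases rightExp_of_ne (y := y) (t := t) hl' with h | h <;> omega
  rcases eq_or_ne f [] with rfl | hf
  · exact h.hasStandardImage_of_right_nil (by omega) (forall_mem_sub_one_le hl hleft)
  rcases eq_or_ne e [] with rfl | he
  · have hnonpos := forall_mem_nonpos hleft
    rcases ht with rfl | rfl
    · have hnonneg := forall_mem_nonneg hright
      have hzero : f = List.replicate f.length 0 := List.eq_replicate_iff.2
        ⟨rfl, fun k hk ↦ (hnonpos k hk).antisymm (hnonneg k (List.mem_reverse.2 hk))⟩
      exact (hzero ▸ h : TwinForm ψ x y z (List.replicate 0 0) _ (-1) 0)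
        |>.hasStandardImage_of_replicate_zero (by simp)
    · exact h.hasStandardImage_of_left_nil hnonpos
  · exact h.hasStandardImage_of_ne_nil ht hco he hf hleft hl' hright

end TwinForm

lemma exists_twinForm_shiftHom {ψ : Fin 3 → F₂} {x y z : Fin 3} (hl : IsLabelling x y z) {i j : ℕ}
    (hi : 0 < i) (hj : 0 < j) (hx : HasDegree i (ψ x)) (hz : HasDegree j (ψ z))
    (hy : ψ y = ψ z * genA) :
    ∃ s t s' t' e f, e.length + 1 = i ∧ f.length + 1 = j ∧
      TwinForm (fun l ↦ shiftHom s t (ψ l)) x y z e f s' t' := by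
  obtain ⟨s, e, t, hx, he⟩ := hx.exists_eq hi
  obtain ⟨s', f, t', hz, hf⟩ := hz.exists_eq hj
  refine ⟨-s, -t, s' - s, t' - t, e.map (· + (-s + -t)), f.map (· + (-s + -t)), by simpa, by simpa,
    hl, ?_, ?_, by simp [hy]⟩
  · simp only [hx, map_mul, map_zpow, shiftHom_genA, shiftHom_gapWord]
    simp [mul_assoc]
  · simp only [hz, map_mul, map_zpow, shiftHom_genA, shiftHom_gapWord]
    rw [show t' - t = -t + t' by ring, sub_eq_add_neg, zpow_add, zpow_add]
    simp only [mul_assoc]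

theorem hasStandardImage_of_eq_mul_genA {ψ : Fin 3 → F₂} {x y z : Fin 3}
    (hl : IsLabelling x y z) {i j : ℕ} (hi : 0 < i) (hj : 0 < j) (hco : Nat.Coprime i j)
    (hx : HasDegree i (ψ x)) (hz : HasDegree j (ψ z)) (hy : ψ y = ψ z * genA)
    {u v : List (Fin 3)} (hperm : (y :: u).Perm (z :: v))
    (hev : evalWord ψ (y :: u) = evalWord ψ (z :: v)) : HasStandardImage ψ := by
  obtain ⟨s, t, s', t', e, f, rfl, rfl, h⟩ := exists_twinForm_shiftHom hl hi hj hx hz hy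
  refine .of_map (shiftHom_injective s t) ?_
  have hev' := congrArg (shiftHom s t) hev
  rw [map_evalWord, map_evalWord] at hev'
  cases u with
  | nil => exact (hl.ne₂₃.symm (List.mem_singleton.1 (hperm.symm.subset List.mem_cons_self))).elim
  | cons l u =>
  cases v with
  | nil => exact (hl.ne₂₃ (List.mem_singleton.1 (hperm.subset List.mem_cons_self))).elim
  | cons l' v =>
  have hlead : 1 + TwinForm.leftExp x s' l = TwinForm.leftExp x s' l' :=
    (h.leadExp_eq_and_expand_eq hev').1
  rcases eq_or_ne l x with rfl | hlx
  · have hlx' : l' ≠ l := by rintro rfl; simp at hlead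
    obtain rfl : s' = 1 := by
      rw [TwinForm.leftExp_self, TwinForm.leftExp_of_ne hlx'] at hlead
      omega
    have hev'' := congrArg (substHom genA⁻¹ genB) hev'
    rw [map_evalWord, map_evalWord] at hev''
    exact .of_map (substHom_injective genA⁻¹ genB (by simp) (by simp))
      (h.swap.hasStandardImage_of_evalWord_eq (by simpa using hco) hlx' hperm.symm hev''.symm)
  · rw [TwinForm.leftExp_of_ne hlx] at hlead
    obtain rfl : l' = x := by
      by_contra hlx'
      rw [TwinForm.leftExp_of_ne hlx'] at hlead
      omega
    obtain rfl : s' = -1 := by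
      rw [TwinForm.leftExp_self] at hlead
      omega
    exact h.hasStandardImage_of_evalWord_eq hco hlx hperm hev'

section Morphisms

variable {n : ℕ} {β : Type*} (h : Fin n → List β)

@[simp] lemma mApply_nil : mApply h [] = [] := rfl

@[simp] lemma mApply_cons (x : Fin n) (w : List (Fin n)) :
    mApply h (x :: w) = h x ++ mApply h w := by
  simp [mApply]

lemma mApply_append (w w' : List (Fin n)) : mApply h (w ++ w') = mApply h w ++ mApply h w' := by
  simp [mApply]

lemma mApply_flatMap (σ : Fin n → List (Fin n)) (w : List (Fin n)) :
    mApply h (w.flatMap σ) = mApply (fun x ↦ mApply h (σ x)) w := by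
  induction w with
  | nil => rfl
  | cons x w ih => rw [List.flatMap_cons, mApply_append, ih, mApply_cons]

/-- The images of the unknowns commute pairwise, that is, they are powers of a common word. -/
def IsCommuting : Prop := ∀ k l, h k ++ h l = h l ++ h k

variable {h}

lemma IsCommuting.append_mApply (hc : IsCommuting h) (k : Fin n) (w : List (Fin n)) :
    h k ++ mApply h w = mApply h w ++ h k := by
  induction w with
  | nil => simp
  | cons x w ih => rw [mApply_cons, ← List.append_assoc, hc k x, List.append_assoc, ih,
      List.append_assoc]

lemma IsCommuting.mApply_append_mApply (hc : IsCommuting h) (w w' : List (Fin n)) :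
    mApply h w ++ mApply h w' = mApply h w' ++ mApply h w := by
  induction w with
  | nil => simp
  | cons x w ih => rw [mApply_cons, List.append_assoc, ih, ← List.append_assoc,
      hc.append_mApply, List.append_assoc]

/-- The morphisms `ψ` (into a group) and `h` (into words) have the same kernel. -/
def Represents {G : Type*} [Group G] (ψ : Fin n → G) (h : Fin n → List β) : Prop :=
  ∀ w w', mApply h w = mApply h w' ↔ evalWord ψ w = evalWord ψ w'

namespace Represents

variable {G H : Type*} [Group G] [Group H] {ψ : Fin n → G}

lemma comp_injective (hψ : Represents ψ h) {θ : G →* H} (hθ : Function.Injective θ) :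
    Represents (fun l ↦ θ (ψ l)) h := fun w w' ↦ by
  rw [hψ, ← map_evalWord, ← map_evalWord, hθ.eq_iff]

lemma flatMap (hψ : Represents ψ h) (σ : Fin n → List (Fin n)) :
    Represents (fun l ↦ evalWord ψ (σ l)) (fun l ↦ mApply h (σ l)) := fun w w' ↦ by
  rw [← mApply_flatMap, ← mApply_flatMap, hψ, evalWord_flatMap, evalWord_flatMap]

end Represents

end Morphisms

section TwoWords

variable {α : Type*} {f : Bool → List α}

lemma prefix_of_append_eq_append {X Y U V : List α} (h : X ++ U = Y ++ V)
    (hle : X.length ≤ Y.length) : X <+: Y :=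
  List.prefix_of_prefix_length_le (List.prefix_append X U) (h ▸ List.prefix_append Y V) hle

lemma append_comm_of_flatMap_eq {u v : List Bool}
    (h : (false :: u).flatMap f = (true :: v).flatMap f) :
    f false ++ f true = f true ++ f false := by
  induction hn : (f false).length + (f true).length using Nat.strong_induction_on
    generalizing f u v with
  | _ n ih =>
  wlog hle : (f false).length ≤ (f true).length generalizing f u v
  · refine (this (f := fun b ↦ f !b) (u := v.map (!·)) (v := u.map (!·)) ?_
      (by rw [← hn]; exact add_comm _ _) (le_of_not_ge hle)).symm
    simpa [List.flatMap_map] using h.symm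
  rw [List.flatMap_cons, List.flatMap_cons] at h
  obtain ⟨Z, hZ⟩ := prefix_of_append_eq_append h hle
  rcases eq_or_ne (f false) [] with h₀ | h₀
  · simp [h₀]
  set σ : Bool → List Bool := fun b ↦ false :: bif b then [true] else [] with hσ
  set g : Bool → List α := fun b ↦ bif b then Z else f false with hg
  have hfg : f = fun b ↦ (σ b).flatMap g := by
    funext b
    cases b <;> simp [hσ, hg, hZ]
  have hlen : (g false).length + (g true).length < n := by
    have := congrArg List.length hZ
    have := List.length_pos_iff.2 h₀
    rw [List.length_append] at *
    simp only [hg, cond_true, cond_false]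
    omega
  cases u with
  | nil =>
    have hZ₀ : Z = [] := by
      rw [← hZ, List.append_assoc, List.append_cancel_left_eq] at h
      exact (List.append_eq_nil_iff.1 h.symm).1
    simp [← hZ, hZ₀]
  | cons b u =>
    have h' : (σ b ++ u.flatMap σ).flatMap g = (true :: v.flatMap σ).flatMap g := by
      have hσg (w : List Bool) : (w.flatMap σ).flatMap g = w.flatMap f := by
        rw [List.flatMap_assoc, ← hfg]
      rw [← List.flatMap_cons, List.flatMap_cons (f := g), hσg, hσg]
      rwa [← hZ, List.append_assoc, List.append_cancel_left_eq] at h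
    have hcomm : f false ++ Z = Z ++ f false := ih _ hlen h' rfl
    rw [← hZ, List.append_assoc, ← hcomm]

lemma flatMap_injective_of_append_ne (h : f false ++ f true ≠ f true ++ f false) :
    Function.Injective fun w : List Bool ↦ w.flatMap f := by
  have hne : ∀ b, f b ≠ [] := by
    rintro (_ | _) hb <;> simp [hb] at h
  intro u
  induction u with
  | nil =>
    rintro (_ | ⟨b, v⟩) huv
    · rfl
    · exact absurd (List.append_eq_nil_iff.1 huv.symm).1 (hne b)
  | cons b u ih =>
    rintro (_ | ⟨c, v⟩) huv
    · exact absurd (List.append_eq_nil_iff.1 huv).1 (hne b)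
    · rcases eq_or_ne b c with rfl | hbc
      · exact congrArg _ (ih (List.append_cancel_left huv))
      · cases b <;> cases c
        · exact absurd rfl hbc
        · exact absurd (append_comm_of_flatMap_eq huv) h
        · exact absurd (append_comm_of_flatMap_eq huv.symm) h
        · exact absurd rfl hbc

end TwoWords

lemma evalWord_of_injective {Λ : Type*} :
    Function.Injective (evalWord (FreeGroup.of : Λ → FreeGroup Λ)) := by
  have heval (w : List Λ) : evalWord FreeGroup.of w = FreeGroup.mk (w.map (·, true)) := by
    induction w with
    | nil => rfl
    | cons x w ih => rw [evalWord_cons, ih]; rfl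
  have hred (w : List Λ) : FreeGroup.IsReduced (w.map (·, true)) :=
    (List.isChain_map _).2 ((List.pairwise_of_forall fun _ _ _ ↦ rfl).isChain)
  intro u v huv
  rw [heval, heval] at huv
  obtain ⟨w, hu, hv⟩ := FreeGroup.Red.exact.1 huv
  rw [(hred _).red_iff_eq] at hu hv
  exact List.map_injective_iff.2 (fun _ _ h ↦ (Prod.ext_iff.1 h).1) (hu.symm.trans hv)

section StandardModel

variable {α : Type*} {h : Fin 3 → List α} {ψ : Fin 3 → F₂} {x a b r p q : Fin 3}

lemma IsStandardAt.of_isLabelling {p' q' : Fin 3} (hψ : IsStandardAt ψ r p q)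
    (hl : IsLabelling r p' q') : IsStandardAt ψ r p' q' := by
  rcases hψ.1.eq_or_eq_or_eq p' with rfl | rfl | rfl
  · exact absurd rfl hl.ne₁₂
  · rcases hψ.1.eq_or_eq_or_eq q' with rfl | rfl | rfl
    exacts [absurd rfl hl.ne₁₃, absurd rfl hl.ne₂₃, hψ]
  · rcases hψ.1.eq_or_eq_or_eq q' with rfl | rfl | rfl
    exacts [absurd rfl hl.ne₁₃, hψ.swap, absurd rfl hl.ne₂₃]

lemma IsStandardAt.hasStandardImage (hψ : IsStandardAt ψ r p q) : HasStandardImage ψ :=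
  ⟨MonoidHom.id _, Function.injective_id, r, p, q, hψ⟩

/-- Some morphism into `F₂` in standard form has the same kernel as `h`. -/
def HasStandardModel (h : Fin 3 → List α) : Prop :=
  ∃ ψ r p q, IsStandardAt ψ r p q ∧ Represents ψ h

lemma HasStandardImage.hasStandardModel (hψ : HasStandardImage ψ) (hr : Represents ψ h) :
    HasStandardModel h := by
  obtain ⟨θ, hθ, r, p, q, hst⟩ := hψ
  exact ⟨_, r, p, q, hst, hr.comp_injective hθ⟩

/-- The elementary substitution `a ↦ b a`. -/
def prependTo (a b l : Fin 3) : List (Fin 3) := if l = a then [b, a] else [l]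

@[simp] lemma prependTo_self : prependTo a b a = [b, a] := if_pos rfl

lemma prependTo_of_ne {l : Fin 3} (hl : l ≠ a) : prependTo a b l = [l] := if_neg hl

lemma flatMap_prependTo_ne_cons (hab : a ≠ b) (v t : List (Fin 3)) :
    v.flatMap (prependTo a b) ≠ a :: t := by
  cases v with
  | nil => simp
  | cons l v =>
    rcases eq_or_ne l a with rfl | hl
    · simp [hab.symm]
    · simp [prependTo_of_ne hl, hl]

lemma flatMap_prependTo_cons_ne (hab : a ≠ b) (u v : List (Fin 3)) :
    (a :: u).flatMap (prependTo a b) ≠ (b :: v).flatMap (prependTo a b) := fun huv ↦ by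
  rw [List.flatMap_cons, List.flatMap_cons, prependTo_self, prependTo_of_ne hab.symm] at huv
  exact flatMap_prependTo_ne_cons hab v _ (List.cons.inj huv).2.symm

lemma hasStandardModel_of_eq (hl : IsLabelling x a b) (hab : h a = h b) (hc : ¬ IsCommuting h) :
    HasStandardModel h := by
  set τ : Fin 3 → Bool := fun l ↦ l != x
  set f : Bool → List α := fun c ↦ bif c then h b else h x with hf
  have hτa : τ a = true := bne_iff_ne.2 hl.ne₁₂.symm
  have hτb : τ b = true := bne_iff_ne.2 hl.ne₁₃.symm
  have hτx : τ x = false := bne_self_eq_false x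
  have hfh : h = fun l ↦ f (τ l) := hl.funext_iff.2 ⟨by simp [hf, hτx], by simp [hf, hτa, hab],
    by simp [hf, hτb]⟩
  have hxb : f false ++ f true ≠ f true ++ f false := fun hxb ↦ hc fun k l ↦ by
    rw [hfh]
    dsimp only
    cases τ k <;> cases τ l <;> first | rfl | exact hxb | exact hxb.symm
  have hmApply (w : List (Fin 3)) : mApply h w = (w.map τ).flatMap f := by
    conv_lhs => rw [hfh]
    simp [mApply, List.flatMap_def, Function.comp_def]
  have heval (w : List (Fin 3)) :
      evalWord (fun l ↦ FreeGroup.of (τ l)) w = evalWord FreeGroup.of (w.map τ) := by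
    simp [evalWord, Function.comp_def]
  refine ⟨fun l ↦ FreeGroup.of (τ l), x, a, b,
    ⟨hl, congrArg FreeGroup.of hτx, 1, 1, ?_, ?_, one_pos, one_pos, by simp⟩,
    fun w w' ↦ ?_⟩
  · simpa only [hτa, genB] using hasDegree_genB
  · simpa only [hτb, genB] using hasDegree_genB
  · rw [hmApply, hmApply, (flatMap_injective_of_append_ne hxb).eq_iff, heval, heval,
      evalWord_of_injective.eq_iff]

lemma IsStandardAt.hasStandardImage_prependTo (hψ : IsStandardAt ψ r p q) (hl : IsLabelling x a b)
    {u v : List (Fin 3)} (hperm : (a :: u).Perm (b :: v))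
    (hev : evalWord (fun l ↦ evalWord ψ (prependTo a b l)) (a :: u) =
      evalWord (fun l ↦ evalWord ψ (prependTo a b l)) (b :: v)) :
    HasStandardImage fun l ↦ evalWord ψ (prependTo a b l) := by
  set φ : Fin 3 → F₂ := fun l ↦ evalWord ψ (prependTo a b l) with hφ
  have hφa : φ a = ψ b * ψ a := by simp [hφ]
  have hφb : φ b = ψ b := by simp [hφ, prependTo_of_ne hl.ne₂₃.symm]
  have hφx : φ x = ψ x := by simp [hφ, prependTo_of_ne hl.ne₁₂]
  rcases hl.eq_or_eq_or_eq r with rfl | rfl | rfl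
  · obtain ⟨-, hr, i, j, ha, hb, hi, hj, hco⟩ := hψ.of_isLabelling hl
    refine IsStandardAt.hasStandardImage ⟨hl, hφx.trans hr, j + i, j, hφa ▸ hb.mul ha, hφb ▸ hb,
      by omega, hj, by simpa using hco⟩
  · obtain ⟨-, hr, i, j, hx, hb, hi, hj, hco⟩ := hψ.of_isLabelling hl.swap₂₃.rotate
    exact hasStandardImage_of_eq_mul_genA hl hi hj hco (hφx ▸ hx) (hφb ▸ hb)
      (by rw [hφa, hφb, hr]) hperm hev
  · obtain ⟨-, hr, i, j, hx, ha, hi, hj, hco⟩ := hψ.of_isLabelling hl.rotate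
    refine IsStandardAt.hasStandardImage ⟨hl.rotate, hφb.trans hr, i, j, hφx ▸ hx, ?_, hi, hj, hco⟩
    rw [hφa, hr]
    simpa using hasDegree_genA.mul ha

lemma exists_isLabelling (hab : a ≠ b) : ∃ x, IsLabelling x a b := by
  obtain ⟨x, hxa, hxb⟩ : ∃ x : Fin 3, x ≠ a ∧ x ≠ b := by revert a b; decide
  exact ⟨x, hxa, hxb, hab⟩

lemma mApply_update_prependTo {R : List α} (hab : a ≠ b) (hR : h b ++ R = h a) :
    (fun l ↦ mApply (Function.update h a R) (prependTo a b l)) = h := by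
  funext l
  rcases eq_or_ne l a with rfl | hl
  · simp [hab.symm, hR]
  · simp [prependTo_of_ne hl, hl]

lemma sum_length_update_lt {R : List α} (hb : h b ≠ []) (hR : h b ++ R = h a) :
    ∑ l, (Function.update h a R l).length < ∑ l, (h l).length := by
  have hlt : R.length < (h a).length := by
    rw [← hR, List.length_append]
    exact Nat.lt_add_of_pos_left (List.length_pos_iff.2 hb)
  refine Finset.sum_lt_sum (fun l _ ↦ ?_) ⟨a, Finset.mem_univ _, by simpa using hlt⟩
  rcases eq_or_ne l a with rfl | hl
  · simpa using hlt.le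
  · simp [hl]

lemma not_isCommuting_update {R : List α} (hab : a ≠ b) (hR : h b ++ R = h a)
    (hc : ¬ IsCommuting h) : ¬ IsCommuting (Function.update h a R) := fun hc' ↦ hc fun k l ↦ by
  rw [← mApply_update_prependTo hab hR]
  exact hc'.mApply_append_mApply _ _

theorem hasStandardModel_of_mApply_eq (hne : ∀ l, h l ≠ []) (hc : ¬ IsCommuting h)
    {u v : List (Fin 3)} (hperm : u.Perm v) (huv : u ≠ v) (heq : mApply h u = mApply h v) :
    HasStandardModel h := by
  induction hn : ∑ l, (h l).length using Nat.strong_induction_on generalizing h u v with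
  | _ n ih =>
  obtain ⟨w, a, b, u, v, rfl, rfl, hab⟩ := exists_eq_append_cons_of_ne hperm.length_eq huv
  rw [List.perm_append_left_iff] at hperm
  rw [mApply_append, mApply_append, List.append_cancel_left_eq] at heq
  clear huv
  wlog hle : (h b).length ≤ (h a).length generalizing a b u v
  · exact this b a v u hab.symm hperm.symm heq.symm (le_of_not_ge hle)
  obtain ⟨x, hl⟩ := exists_isLabelling hab
  obtain ⟨R, hR⟩ : h b <+: h a := by
    rw [mApply_cons, mApply_cons] at heq
    exact prefix_of_append_eq_append heq.symm hle
  rcases eq_or_ne R [] with rfl | hR₀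
  · exact hasStandardModel_of_eq hl (by simpa using hR.symm) hc
  have hh := mApply_update_prependTo hab hR
  have hne' : ∀ l, Function.update h a R l ≠ [] := fun l ↦ by
    rcases eq_or_ne l a with rfl | hla
    · simpa using hR₀
    · simpa [hla] using hne l
  have heq' : mApply (Function.update h a R) ((a :: u).flatMap (prependTo a b)) =
      mApply (Function.update h a R) ((b :: v).flatMap (prependTo a b)) := by
    rw [mApply_flatMap, mApply_flatMap, hh, heq]
  obtain ⟨ψ, r, p, q, hψ, hrep⟩ := ih _ (hn ▸ sum_length_update_lt (hne b) hR) hne'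
    (not_isCommuting_update hab hR hc) (hperm.flatMap_right _)
    (flatMap_prependTo_cons_ne hab u v) heq' rfl
  replace hrep := hrep.flatMap (prependTo a b)
  rw [hh] at hrep
  exact (hψ.hasStandardImage_prependTo hl hperm ((hrep _ _).1 heq)).hasStandardModel hrep

end StandardModel

section StandardForm

variable {r p : Fin 3} {S T : Bool → ℤ} {E : Bool → List ℤ}

/-- The assignment that sends `r` to `a` and every other unknown `l` to
`a^{S i} · gapWord (E i) · a^{T i}`, where `i` is `false` for `l = p` and `true` for the third
unknown. -/
def standardForm (r p : Fin 3) (S T : Bool → ℤ) (E : Bool → List ℤ) (l : Fin 3) : F₂ :=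
  if l = r then genA else genA ^ S (l != p) * gapWord (E (l != p)) * genA ^ T (l != p)

lemma evalWord_standardForm_reverse {u v : List (Fin 3)}
    (h : evalWord (standardForm r p S T E) u = evalWord (standardForm r p S T E) v) :
    evalWord (standardForm r p T S fun i ↦ (E i).reverse) u.reverse =
      evalWord (standardForm r p T S fun i ↦ (E i).reverse) v.reverse := by
  have hrev : (standardForm r p T S fun i ↦ (E i).reverse) =
      fun l ↦ reversal (standardForm r p S T E l) := by
    funext l
    by_cases hl : l = r
    · simp [standardForm, hl]
    · simp [standardForm, hl, reversal_mul, mul_assoc]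
  rw [hrev, evalWord_reversal, evalWord_reversal, h]

/-- The number of occurrences of `r` at the beginning of a word. -/
def leadingCount (r : Fin 3) : List (Fin 3) → ℕ
  | [] => 0
  | l :: w => if l = r then leadingCount r w + 1 else 0

/-- The letters of a word other than `r`, each with the number of occurrences of `r` that
immediately follow it; the letter `p` is encoded as `false`. -/
def blocks (r p : Fin 3) : List (Fin 3) → List Token
  | [] => []
  | l :: w => if l = r then blocks r p w else (l != p, (leadingCount r w : ℤ)) :: blocks r p w

/-- The tokens of the image of the word encoded by `U` under a `standardForm`. -/
def tokenJunctions (S T : Bool → ℤ) (U : List Token) : List Token :=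
  junctions (fun t ↦ S t.1) (fun t ↦ T t.1 + t.2) Prod.fst U

lemma map_fst_tokenJunctions (S T : Bool → ℤ) (U : List Token) :
    (tokenJunctions S T U).map Prod.fst = U.map Prod.fst := map_fst_junctions _ _ _ _

lemma evalWord_standardForm (r p : Fin 3) (S T : Bool → ℤ) (E : Bool → List ℤ)
    (w : List (Fin 3)) :
    evalWord (standardForm r p S T E) w =
      genA ^ (leadingCount r w + leadExp (fun t ↦ S t.1) (blocks r p w)) *
        syllables (expand E (tokenJunctions S T (blocks r p w))) := by
  rw [zpow_add, mul_assoc, tokenJunctions, ← evalWord_eq_zpow_mul_syllables]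
  induction w with
  | nil => simp [blocks, leadingCount]
  | cons l w ih =>
    rw [evalWord_cons, ih]
    by_cases hl : l = r
    · simp only [standardForm, blocks, leadingCount, hl, if_true]
      rw [Nat.cast_succ, add_comm, zpow_one_add, mul_assoc]
    · simp only [standardForm, blocks, leadingCount, hl, if_false, evalWord_cons, zpow_add,
        mul_assoc, Nat.cast_zero, zpow_zero, one_mul]

lemma evalWord_standardForm_eq_iff {w w' : List (Fin 3)} :
    evalWord (standardForm r p S T E) w = evalWord (standardForm r p S T E) w' ↔
      leadingCount r w + leadExp (fun t ↦ S t.1) (blocks r p w) =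
          leadingCount r w' + leadExp (fun t ↦ S t.1) (blocks r p w') ∧
        expand E (tokenJunctions S T (blocks r p w)) =
          expand E (tokenJunctions S T (blocks r p w')) := by
  rw [evalWord_standardForm, evalWord_standardForm, zpow_mul_syllables_inj]

lemma map_fst_blocks (r p : Fin 3) (w : List (Fin 3)) :
    (blocks r p w).map Prod.fst = (w.filter (· ≠ r)).map (· != p) := by
  induction w with
  | nil => rfl
  | cons l w ih => by_cases hl : l = r <;> simpa [blocks, hl] using ih

lemma perm_map_fst_blocks {w w' : List (Fin 3)} (h : w.Perm w') :
    ((blocks r p w).map Prod.fst).Perm ((blocks r p w').map Prod.fst) := by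
  rw [map_fst_blocks, map_fst_blocks]
  exact (h.filter _).map _

lemma count_false_map_fst_blocks (hrp : r ≠ p) (w : List (Fin 3)) :
    ((blocks r p w).map Prod.fst).count false = w.count p := by
  rw [map_fst_blocks]
  induction w with
  | nil => rfl
  | cons l w ih =>
    obtain rfl | hl := eq_or_ne l r
    · simpa [hrp] using ih
    · obtain rfl | hp := eq_or_ne l p <;> simpa [*] using ih

lemma eq_of_blocks_eq_nil {a : Fin 3} {w : List (Fin 3)} (h : blocks r p (a :: w) = []) :
    a = r := by
  by_contra ha
  simp [blocks, ha] at h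

lemma eq_of_bne_eq_bne (hrp : r ≠ p) {a b : Fin 3} (ha : a ≠ r) (hb : b ≠ r)
    (h : (a != p) = (b != p)) : a = b := by
  revert r p a b
  decide

/-- If both lists of blocks started with the same letter, the words would differ in the number of
leading occurrences of `r`, which is the leading exponent of the image. -/
lemma fst_ne_fst_of_blocks_eq_cons (hrp : r ≠ p) {a b : Fin 3} (hab : a ≠ b)
    {u v : List (Fin 3)} {t t' : Token} {U V : List Token} (hu : blocks r p (a :: u) = t :: U)
    (hv : blocks r p (b :: v) = t' :: V)
    (h : leadingCount r (a :: u) + S t.1 = leadingCount r (b :: v) + S t'.1) : t.1 ≠ t'.1 := by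
  intro htt
  rw [htt, add_left_inj, Nat.cast_inj] at h
  by_cases ha : a = r <;> by_cases hb : b = r
  · exact hab (ha.trans hb.symm)
  · simp [leadingCount, ha, hb] at h
  · simp [leadingCount, ha, hb] at h
  · simp only [blocks, ha, hb, if_false, List.cons.injEq] at hu hv
    rw [← hu.1, ← hv.1] at htt
    exact hab (eq_of_bne_eq_bne hrp ha hb htt)

/-- `U` and `V` have the same letters and start with different ones, and every standard form in
which the words `u` and `v` agree has `S true - S false = k` and equates the expansions of `U` and
`V`. -/
structure IsBlockClash (r p : Fin 3) (u v : List (Fin 3)) (k c : ℤ) (U : List Token) (d : ℤ)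
    (V : List Token) : Prop where
  perm : (((false, c) :: U).map Prod.fst).Perm (((true, d) :: V).map Prod.fst)
  count_le : (U.map Prod.fst).count false + 1 ≤ u.count p
  eq_of_evalWord_eq : ∀ {S T E},
    evalWord (standardForm r p S T E) u = evalWord (standardForm r p S T E) v →
      S true - S false = k ∧ expand E (tokenJunctions S T ((false, c) :: U)) =
        expand E (tokenJunctions S T ((true, d) :: V))

lemma isBlockClash_of_blocks_eq_cons (hrp : r ≠ p) {u v : List (Fin 3)} (hperm : u.Perm v)
    {c d : ℤ} {U V : List Token} (hu : blocks r p u = (false, c) :: U)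
    (hv : blocks r p v = (true, d) :: V) :
    IsBlockClash r p u v (leadingCount r u - leadingCount r v) c U d V where
  perm := by
    rw [← hu, ← hv]
    exact perm_map_fst_blocks hperm
  count_le := by
    rw [← count_false_map_fst_blocks hrp u, hu]
    simp
  eq_of_evalWord_eq h := by
    rw [evalWord_standardForm_eq_iff, hu, hv, leadExp_cons, leadExp_cons] at h
    exact ⟨by linarith [h.1], h.2⟩

lemma IsBlockClash.append_left {u v : List (Fin 3)} {k c d : ℤ} {U V : List Token}
    (h : IsBlockClash r p u v k c U d V) (w : List (Fin 3)) :
    IsBlockClash r p (w ++ u) (w ++ v) k c U d V where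
  perm := h.perm
  count_le := h.count_le.trans (by simp)
  eq_of_evalWord_eq heq := by
    rw [evalWord_append, evalWord_append, mul_right_inj] at heq
    exact h.eq_of_evalWord_eq heq

lemma IsBlockClash.symm {u v : List (Fin 3)} {k c d : ℤ} {U V : List Token}
    (hperm : u.Perm v) (h : IsBlockClash r p u v k c U d V) : IsBlockClash r p v u k c U d V where
  perm := h.perm
  count_le := hperm.count_eq p ▸ h.count_le
  eq_of_evalWord_eq heq := h.eq_of_evalWord_eq heq.symm

lemma exists_isBlockClash (hrp : r ≠ p) {u v : List (Fin 3)} (hperm : u.Perm v) (hne : u ≠ v)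
    (h : evalWord (standardForm r p S T E) u = evalWord (standardForm r p S T E) v) :
    ∃ k c U d V, IsBlockClash r p u v k c U d V := by
  obtain ⟨w, a, b, u, v, rfl, rfl, hab⟩ := exists_eq_append_cons_of_ne hperm.length_eq hne
  suffices H : ∃ k c U d V, IsBlockClash r p (a :: u) (b :: v) k c U d V by
    obtain ⟨k, c, U, d, V, H⟩ := H
    exact ⟨k, c, U, d, V, H.append_left w⟩
  rw [List.perm_append_left_iff] at hperm
  rw [evalWord_append, evalWord_append, mul_right_inj, evalWord_standardForm_eq_iff] at h
  have hlen := (perm_map_fst_blocks (r := r) (p := p) hperm).length_eq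
  rcases hu : blocks r p (a :: u) with _ | ⟨t, U⟩ <;>
    rcases hv : blocks r p (b :: v) with _ | ⟨t', V⟩
  · exact absurd ((eq_of_blocks_eq_nil hu).trans (eq_of_blocks_eq_nil hv).symm) hab
  · simp [hu, hv] at hlen
  · simp [hu, hv] at hlen
  · rw [hu, hv] at h
    have hne := fst_ne_fst_of_blocks_eq_cons hrp hab hu hv h.1
    obtain ⟨_ | _, c⟩ := t <;> obtain ⟨_ | _, d⟩ := t'
    · exact absurd rfl hne
    · exact ⟨_, c, U, d, V, isBlockClash_of_blocks_eq_cons hrp hperm hu hv⟩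
    · exact ⟨_, d, V, c, U, (isBlockClash_of_blocks_eq_cons hrp hperm.symm hv hu).symm hperm.symm⟩
    · exact absurd rfl hne

lemma IsBlockClash.clash {u v : List (Fin 3)} {k c d : ℤ} {U V : List Token}
    (h : IsBlockClash r p u v k c U d V)
    (heq : evalWord (standardForm r p S T E) u = evalWord (standardForm r p S T E) v) :
    Clash E (T false + c + leadExp (fun t ↦ S t.1) U) (tokenJunctions S T U)
      (T true + d + leadExp (fun t ↦ S t.1) V) (tokenJunctions S T V) := by
  refine ⟨(h.eq_of_evalWord_eq heq).2, ?_⟩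
  simpa only [List.map_cons, map_fst_tokenJunctions] using h.perm

/-- The exponents `S` of a standard form normalised to `0` at `p`. -/
def normExp (s : ℤ) (i : Bool) : ℤ := bif i then s else 0

@[simp] lemma normExp_false (s : ℤ) : normExp s false = 0 := rfl

@[simp] lemma normExp_true (s : ℤ) : normExp s true = s := rfl

/-- The standard form normalised so that `p` is sent to `gapWord e`; the third unknown is sent to
`aˢ · gapWord f · aᵗ`. -/
def normForm (r p : Fin 3) (s t : ℤ) (e f : List ℤ) : Fin 3 → F₂ :=
  standardForm r p (normExp s) (normExp t) (gapPair e f)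

lemma evalWord_normForm_reverse {s t : ℤ} {e f : List ℤ} {u v : List (Fin 3)}
    (h : evalWord (normForm r p s t e f) u = evalWord (normForm r p s t e f) v) :
    evalWord (normForm r p t s e.reverse f.reverse) u.reverse =
      evalWord (normForm r p t s e.reverse f.reverse) v.reverse := by
  have hE : (fun i ↦ (gapPair e f i).reverse) = gapPair e.reverse f.reverse := by
    funext i
    cases i <;> rfl
  rw [normForm, ← hE]
  exact evalWord_standardForm_reverse h

/-- The clash at the first difference of `u` and `v` determines `s` and provides the period
`c :: C`; the clash of the reversed equation determines `t` and makes nonempty gaps constant. -/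
theorem exists_forall_normForm (hrp : r ≠ p) {u v : List (Fin 3)} (hperm : u.Perm v)
    (hne : u ≠ v) {μ : ℕ} (hμ : 1 ≤ μ) (hμp : u.count p ≤ μ) :
    ∃ (s₀ t₀ c : ℤ) (C : List ℤ), C.length + 1 ≤ μ ∧ ∀ {s t : ℤ} {e f : List ℤ},
      e.length ≤ f.length → Nat.Coprime (e.length + 1) (f.length + 1) →
      evalWord (normForm r p s t e f) u = evalWord (normForm r p s t e f) v →
      s = s₀ ∧ t = t₀ ∧ (e = [] → f <+: (c :: C) ++ f) ∧
        (e ≠ [] → e = List.replicate e.length c ∧ f = List.replicate f.length c) := by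
  by_cases hsol : ∀ s t e f, evalWord (normForm r p s t e f) u ≠ evalWord (normForm r p s t e f) v
  · exact ⟨0, 0, 0, [], by simpa using hμ, fun _ _ h ↦ absurd h (hsol _ _ _ _)⟩
  push Not at hsol
  obtain ⟨s₁, t₁, e₁, f₁, h₁⟩ := hsol
  obtain ⟨s₀, c, U, d, V, hL⟩ := exists_isBlockClash hrp hperm hne h₁
  obtain ⟨t₀, c', U', d', V', hR⟩ := exists_isBlockClash hrp
    ((u.reverse_perm).trans (hperm.trans v.reverse_perm.symm)) (List.reverse_injective.ne hne)
    (evalWord_normForm_reverse h₁)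
  refine ⟨s₀, t₀, normExp t₀ false + c + leadExp (fun t ↦ normExp s₀ t.1) U,
    initialRun (tokenJunctions (normExp s₀) (normExp t₀) U), ?_, fun {s t e f} hle hco h ↦ ?_⟩
  · have := length_initialRun_le (tokenJunctions (normExp s₀) (normExp t₀) U)
    rw [map_fst_tokenJunctions] at this
    exact (Nat.succ_le_succ this).trans (hL.count_le.trans hμp)
  have h' := evalWord_normForm_reverse h
  obtain rfl : s = s₀ := by simpa using (hL.eq_of_evalWord_eq h).1
  obtain rfl : t = t₀ := by simpa using (hR.eq_of_evalWord_eq h').1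
  have hclash := hL.clash h
  refine ⟨rfl, rfl, ?_, fun he ↦ ?_⟩
  · rintro rfl
    exact hclash.prefix_initialRun_append
  · have hf : f ≠ [] := fun hf ↦ he (List.length_eq_zero_iff.1 (by simpa [hf] using hle))
    obtain ⟨x, hex, hfx⟩ := eq_replicate_of_hasClash he hf hco ⟨_, _, _, _, hclash⟩
      ⟨_, _, _, _, hR.clash h'⟩
    have hconst := hclash
    rw [hex, hfx] at hconst
    obtain ⟨hc, -⟩ := hconst.eq_and_eq_of_replicate (by simpa using he) (by simpa using hf) hco
    rw [hc]
    exact ⟨hex, hfx⟩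

end StandardForm

section Pumping

variable {α : Type*} {st : ℕ → α} {m : ℕ}

/-- The word `st a, st (a + 1), …, st (a + n - 1)`. -/
def segment (st : ℕ → α) (a n : ℕ) : List α := (List.range' a n).map st

@[simp] lemma segment_zero (st : ℕ → α) (a : ℕ) : segment st a 0 = [] := rfl

@[simp] lemma length_segment (st : ℕ → α) (a n : ℕ) : (segment st a n).length = n := by
  simp [segment]

lemma segment_one (st : ℕ → α) (a : ℕ) : segment st a 1 = [st a] := rfl

lemma segment_add (st : ℕ → α) (a n n' : ℕ) :
    segment st a (n + n') = segment st a n ++ segment st (a + n) n' := by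
  simp [segment, ← List.map_append, List.range'_append_1]

lemma segment_add_one (st : ℕ → α) (a n : ℕ) :
    segment st a (n + 1) = st a :: segment st (a + 1) n := by
  rw [add_comm n, segment_add, segment_one, List.singleton_append]

lemma getElem?_segment (st : ℕ → α) {a n i : ℕ} (h : i < n) :
    (segment st a n)[i]? = some (st (a + i)) := by
  simp [segment, h]

lemma segment_congr {a a' n : ℕ} (h : ∀ i < n, st (a + i) = st (a' + i)) :
    segment st a n = segment st a' n := by
  refine List.ext_getElem? fun i ↦ ?_
  by_cases hi : i < n
  · rw [getElem?_segment st hi, getElem?_segment st hi, h i hi]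
  · rw [List.getElem?_eq_none (by simpa using hi), List.getElem?_eq_none (by simpa using hi)]

lemma periodic_apply_add_mul (hst : Function.Periodic st m) (k n : ℕ) :
    st (n + m * k) = st n := by
  rw [mul_comm]
  exact hst.nat_mul k n

lemma segment_add_mul_left (hst : Function.Periodic st m) (a k n : ℕ) :
    segment st (a + m * k) n = segment st a n := by
  refine segment_congr fun i _ ↦ ?_
  rw [add_right_comm]
  exact periodic_apply_add_mul hst k _

lemma segment_mul_add (hst : Function.Periodic st m) (a k n : ℕ) :
    segment st a (m * k + n) = segment st a (m * k) ++ segment st a n := by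
  rw [segment_add, segment_add_mul_left hst]

lemma segment_prefix_segment (st : ℕ → α) (a : ℕ) {n n' : ℕ} (h : n ≤ n') :
    segment st a n <+: segment st a n' := by
  obtain ⟨d, rfl⟩ := Nat.exists_eq_add_of_le h
  exact ⟨_, (segment_add st a n d).symm⟩

lemma le_of_segment_prefix {L : List α} {a n n' : ℕ} {z : α} (hz : z ≠ st (a + n))
    (h : segment st a n ++ [z] <+: L) (h' : segment st a n' <+: L) : n' ≤ n := by
  by_contra! hlt
  have hget := List.prefix_iff_getElem?.1 h n (by simp)
  have hget' := List.prefix_iff_getElem?.1 h' n (by simpa using hlt)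
  rw [hget] at hget'
  exact hz (by simpa [segment] using hget')

lemma not_segment_append_prefix_segment {a n n' : ℕ} {z : α} (hz : z ≠ st (a + n)) :
    ¬ segment st a n ++ [z] <+: segment st a n' := fun h ↦ by
  have hle := le_of_segment_prefix hz h (List.prefix_refl _)
  have hlt : n + 1 ≤ n' := by simpa using h.length_le
  omega

/-- The word obtained from `w` by replacing each hole `none` by `k` periods of the `m`-periodic
sequence `st`. -/
def pump (st : ℕ → α) (m k : ℕ) (w : List (Option α)) : List α :=
  w.flatMap fun x ↦ x.elim (segment st 0 (m * k)) fun d ↦ [d]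

@[simp] lemma pump_nil (st : ℕ → α) (m k : ℕ) : pump st m k [] = [] := rfl

@[simp] lemma pump_none_cons (st : ℕ → α) (m k : ℕ) (w : List (Option α)) :
    pump st m k (none :: w) = segment st 0 (m * k) ++ pump st m k w := rfl

@[simp] lemma pump_some_cons (st : ℕ → α) (m k : ℕ) (d : α) (w : List (Option α)) :
    pump st m k (some d :: w) = d :: pump st m k w := rfl

lemma pump_append (st : ℕ → α) (m k : ℕ) (w w' : List (Option α)) :
    pump st m k (w ++ w') = pump st m k w ++ pump st m k w' := by
  simp [pump]

@[simp] lemma pump_map_some (st : ℕ → α) (m k : ℕ) (l : List α) :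
    pump st m k (l.map some) = l := by
  induction l with
  | nil => rfl
  | cons x l ih => rw [List.map_cons, pump_some_cons, ih]

lemma eq_nil_of_pump_eq_nil (hm : 0 < m) {k : ℕ} (hk : 1 ≤ k) {w : List (Option α)}
    (h : pump st m k w = []) : w = [] := by
  rcases w with _ | ⟨_ | d, w⟩
  · rfl
  · have := congrArg List.length h
    rw [pump_none_cons, List.length_append, length_segment, List.length_nil] at this
    have := Nat.mul_pos hm hk
    omega
  · simp at h

/-- All pumpings of `w` agree with the sequence `st` from position `a` on; `A` counts the letters
and `B` the holes of `w`. -/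
def Follows (st : ℕ → α) (m a : ℕ) (w : List (Option α)) (A B : ℕ) : Prop :=
  ∀ k, pump st m k w = segment st a (A + m * (B * k))

/-- All pumpings of `w` deviate from the sequence `st` started at position `a`, and they do so after
`N` letters and `B` pumped holes. -/
def Deviates (st : ℕ → α) (m a : ℕ) (w : List (Option α)) (N B : ℕ) : Prop :=
  ∃ z, z ≠ st (a + N) ∧ ∀ k, 1 ≤ k → segment st a (N + m * (B * k)) ++ [z] <+: pump st m k w

lemma Follows.some_cons {a A B : ℕ} {w : List (Option α)} (h : Follows st m (a + 1) w A B) :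
    Follows st m a (some (st a) :: w) (A + 1) B := fun k ↦ by
  rw [pump_some_cons, h, add_right_comm, segment_add_one]

lemma Deviates.some_cons {a N B : ℕ} {w : List (Option α)} (h : Deviates st m (a + 1) w N B) :
    Deviates st m a (some (st a) :: w) (N + 1) B := by
  obtain ⟨z, hz, h⟩ := h
  refine ⟨z, by rwa [add_assoc, add_comm 1] at hz, fun k hk ↦ ?_⟩
  rw [pump_some_cons, add_right_comm, segment_add_one, List.cons_append, List.prefix_cons_inj]
  exact h k hk

lemma Follows.none_cons (hst : Function.Periodic st m) {a A B : ℕ} {w : List (Option α)}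
    (ha : ∀ i, st (0 + i) = st (a + i)) (h : Follows st m a w A B) :
    Follows st m a (none :: w) A (B + 1) := fun k ↦ by
  rw [pump_none_cons, h, segment_congr fun i _ ↦ ha i, ← segment_mul_add hst]
  congr 1
  ring

lemma Deviates.none_cons (hst : Function.Periodic st m) {a N B : ℕ} {w : List (Option α)}
    (ha : ∀ i, st (0 + i) = st (a + i)) (h : Deviates st m a w N B) :
    Deviates st m a (none :: w) N (B + 1) := by
  obtain ⟨z, hz, h⟩ := h
  refine ⟨z, hz, fun k hk ↦ ?_⟩
  rw [pump_none_cons, segment_congr fun i _ ↦ ha i,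
    show N + m * ((B + 1) * k) = m * k + (N + m * (B * k)) by ring, segment_mul_add hst,
    List.append_assoc, List.prefix_append_right_inj]
  exact h k hk

lemma deviates_some_cons {a : ℕ} {d : α} (hd : d ≠ st a) (w : List (Option α)) :
    Deviates st m a (some d :: w) 0 0 :=
  ⟨d, hd, fun k _ ↦ by simp⟩

lemma exists_deviates_none_cons {a i : ℕ} (hi : i < m) (ha : st (0 + i) ≠ st (a + i))
    (w : List (Option α)) : ∃ N, Deviates st m a (none :: w) N 0 := by
  classical
  have hex : ∃ i, st (0 + i) ≠ st (a + i) := ⟨i, ha⟩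
  refine ⟨Nat.find hex, st (0 + Nat.find hex), Nat.find_spec hex, fun k hk ↦ ?_⟩
  rw [zero_mul, mul_zero, add_zero,
    segment_congr (a := a) (a' := 0) fun i hi ↦ (not_not.1 (Nat.find_min hex hi)).symm,
    ← segment_one, ← segment_add, pump_none_cons]
  have hle : Nat.find hex + 1 ≤ m * k :=
    (Nat.succ_le_of_lt ((Nat.find_min' hex ha).trans_lt hi)).trans (Nat.le_mul_of_pos_right m hk)
  exact (segment_prefix_segment st 0 hle).trans (List.prefix_append _ _)

lemma forall_eq_of_forall_lt_eq (hm : 0 < m) (hst : Function.Periodic st m) {a : ℕ}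
    (h : ∀ i < m, st (0 + i) = st (a + i)) (i : ℕ) : st (0 + i) = st (a + i) := by
  have hper (b : ℕ) : st (b + i % m) = st (b + i) := by
    rw [← periodic_apply_add_mul hst (i / m), add_assoc, Nat.mod_add_div]
  rw [← hper, ← hper, h _ (Nat.mod_lt i hm)]

lemma exists_follows_append (hm : 0 < m) (hst : Function.Periodic st m) (u : List (Option α))
    (a : ℕ) : ∃ u₁ u₂ A B, u = u₁ ++ u₂ ∧ Follows st m a u₁ A B ∧
      (u₂ = [] ∨ ∃ N, Deviates st m a u N B) := by
  have hnil : Follows st m a [] 0 0 := fun k ↦ by simp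
  induction u generalizing a with
  | nil => exact ⟨[], [], 0, 0, rfl, hnil, .inl rfl⟩
  | cons x u ih =>
    rcases x with _ | d
    · by_cases ha : ∀ i < m, st (0 + i) = st (a + i)
      · have ha' := forall_eq_of_forall_lt_eq hm hst ha
        obtain ⟨u₁, u₂, A, B, rfl, hfol, hdev⟩ := ih a hnil
        exact ⟨none :: u₁, u₂, A, B + 1, rfl, hfol.none_cons hst ha',
          hdev.imp_right fun ⟨N, h⟩ ↦ ⟨N, h.none_cons hst ha'⟩⟩
      · push Not at ha
        obtain ⟨i, hi, ha⟩ := ha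
        exact ⟨[], _, 0, 0, rfl, hnil, .inr (exists_deviates_none_cons hi ha u)⟩
    · by_cases hd : d = st a
      · obtain ⟨u₁, u₂, A, B, rfl, hfol, hdev⟩ := ih (a + 1) (fun k ↦ by simp)
        subst hd
        exact ⟨_, u₂, A + 1, B, rfl, hfol.some_cons,
          hdev.imp_right fun ⟨N, h⟩ ↦ ⟨N + 1, h.some_cons⟩⟩
      · exact ⟨[], _, 0, 0, rfl, hnil, .inr ⟨0, deviates_some_cons hd u⟩⟩

lemma eq_and_eq_of_add_mul_eq (hm : 0 < m) {k₁ k₂ : ℕ} (hk : k₁ ≠ k₂) {x y x' y' : ℕ}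
    (h₁ : x + m * (y * k₁) = x' + m * (y' * k₁)) (h₂ : x + m * (y * k₂) = x' + m * (y' * k₂)) :
    x = x' ∧ y = y' := by
  obtain rfl : y = y' := by
    zify at *
    have h : ((m : ℤ) * (k₁ - k₂)) * (y - y') = 0 := by linear_combination h₁ - h₂
    have hne : (m : ℤ) * (k₁ - k₂) ≠ 0 := mul_ne_zero (by omega) (sub_ne_zero.2 hk)
    exact sub_eq_zero.1 ((mul_eq_zero.1 h).resolve_left hne)
  exact ⟨by omega, rfl⟩

lemma ne_apply_of_periodic (hst : Function.Periodic st m) {a N : ℕ} {z : α}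
    (hz : z ≠ st (a + N)) (k : ℕ) : z ≠ st (a + (N + m * k)) := by
  rwa [← add_assoc, periodic_apply_add_mul hst]

lemma Deviates.pump_ne_segment (hst : Function.Periodic st m) {a N B k : ℕ}
    {w : List (Option α)} (h : Deviates st m a w N B) (hk : 1 ≤ k) (n : ℕ) :
    pump st m k w ≠ segment st a n := by
  obtain ⟨z, hz, h⟩ := h
  intro heq
  exact not_segment_append_prefix_segment (ne_apply_of_periodic hst hz _) (heq ▸ h k hk)

lemma Deviates.length_eq_of_pump_eq (hst : Function.Periodic st m) {a N B N' B' k : ℕ}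
    {w w' : List (Option α)} (h : Deviates st m a w N B) (h' : Deviates st m a w' N' B')
    (hk : 1 ≤ k) (heq : pump st m k w = pump st m k w') :
    N + m * (B * k) = N' + m * (B' * k) := by
  obtain ⟨z, hz, h⟩ := h
  obtain ⟨z', hz', h'⟩ := h'
  have hpre := h k hk
  have hpre' := h' k hk
  rw [← heq] at hpre'
  exact le_antisymm
    (le_of_segment_prefix (ne_apply_of_periodic hst hz' _) hpre'
      ((List.prefix_append _ _).trans hpre))
    (le_of_segment_prefix (ne_apply_of_periodic hst hz _) hpre
      ((List.prefix_append _ _).trans hpre'))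

lemma Follows.exists_shorter (hm : 0 < m) (hst : Function.Periodic st m) {k₁ : ℕ} (hk₁ : 1 ≤ k₁)
    {u₁ v₁ : List (Option α)} {A A' B : ℕ} (hA : A ≤ A') (hB : 1 ≤ B)
    (hu : Follows st m 0 u₁ A B) (hv : Follows st m 0 v₁ A' B) (u₂ v₂ : List (Option α)) :
    ∃ u' v', (pump st m k₁ u').length < (pump st m k₁ (u₁ ++ u₂)).length ∧
      ∀ k, pump st m k (u₁ ++ u₂) = pump st m k (v₁ ++ v₂) ↔
        pump st m k u' = pump st m k v' := by
  obtain ⟨R, rfl⟩ := Nat.exists_eq_add_of_le hA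
  have hv₁ (k : ℕ) : pump st m k v₁ = pump st m k u₁ ++ segment st A R := by
    rw [hv, hu, add_right_comm, segment_add _ _ (A + _), ← add_assoc, segment_add_mul_left hst,
      zero_add]
  refine ⟨u₂, (segment st A R).map some ++ v₂, ?_, fun k ↦ ?_⟩
  · have : 0 < m * (B * k₁) := Nat.mul_pos hm (Nat.mul_pos hB hk₁)
    rw [pump_append, List.length_append, hu, length_segment]
    omega
  · rw [pump_append, pump_append, hv₁, pump_append, pump_map_some, List.append_assoc,
      List.append_cancel_left_eq]

/-- Comparing the lengths for `k₁` and for `k₂` shows that both words have the same number of holes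
before they deviate from the sequence, so what the two initial parts have in common cancels for all
`k`. -/
lemma pump_none_cons_eq_or_exists_shorter (hm : 0 < m) (hst : Function.Periodic st m) {k₁ k₂ : ℕ}
    (hk₁ : 1 ≤ k₁) (hk₂ : 1 ≤ k₂) (hk : k₁ ≠ k₂) {u v : List (Option α)}
    (h₁ : pump st m k₁ (none :: u) = pump st m k₁ v)
    (h₂ : pump st m k₂ (none :: u) = pump st m k₂ v) :
    (∀ k, pump st m k (none :: u) = pump st m k v) ∨
    ∃ u' v', (pump st m k₁ u').length < (pump st m k₁ (none :: u)).length ∧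
      ∀ k, pump st m k (none :: u) = pump st m k v ↔ pump st m k u' = pump st m k v' := by
  obtain ⟨u₁, u₂, A, B, rfl, hu, hu₂⟩ := exists_follows_append hm hst u 0
  obtain ⟨v₁, v₂, A', B', rfl, hv, hv₂⟩ := exists_follows_append hm hst v 0
  replace hu : Follows st m 0 (none :: u₁) A (B + 1) := hu.none_cons hst fun _ ↦ rfl
  rcases hu₂ with rfl | ⟨N, hN⟩ <;> rcases hv₂ with rfl | ⟨N', hN'⟩
  · left
    rw [List.append_nil, List.append_nil] at *
    have h₁ := congrArg List.length h₁
    have h₂ := congrArg List.length h₂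
    rw [hu, hv, length_segment, length_segment] at h₁ h₂
    obtain ⟨rfl, rfl⟩ := eq_and_eq_of_add_mul_eq hm hk h₁ h₂
    exact fun k ↦ (hu k).trans (hv k).symm
  · rw [List.append_nil, hu] at h₁
    exact absurd h₁.symm (hN'.pump_ne_segment hst hk₁ _)
  · rw [List.append_nil v₁, hv] at h₁
    exact absurd h₁ ((hN.none_cons hst fun _ ↦ rfl).pump_ne_segment hst hk₁ _)
  · right
    replace hN : Deviates st m 0 _ N (B + 1) := hN.none_cons hst fun _ ↦ rfl
    obtain ⟨-, rfl⟩ := eq_and_eq_of_add_mul_eq hm hk (hN.length_eq_of_pump_eq hst hN' hk₁ h₁)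
      (hN.length_eq_of_pump_eq hst hN' hk₂ h₂)
    rw [← List.cons_append] at h₁ ⊢
    rcases le_total A A' with hA | hA
    · exact hu.exists_shorter hm hst hk₁ hA le_add_self hv u₂ v₂
    · obtain ⟨v', u', hlt, heq⟩ := hv.exists_shorter hm hst hk₁ hA le_add_self hu v₂ u₂
      exact ⟨u', v', by rwa [← (heq k₁).1 h₁.symm, h₁],
        fun k ↦ eq_comm.trans ((heq k).trans eq_comm)⟩

lemma pump_eq_or_exists_shorter (hm : 0 < m) (hst : Function.Periodic st m) {k₁ k₂ : ℕ}
    (hk₁ : 1 ≤ k₁) (hk₂ : 1 ≤ k₂) (hk : k₁ ≠ k₂) {u v : List (Option α)}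
    (h₁ : pump st m k₁ u = pump st m k₁ v) (h₂ : pump st m k₂ u = pump st m k₂ v) :
    (∀ k, pump st m k u = pump st m k v) ∨
    ∃ u' v', (pump st m k₁ u').length < (pump st m k₁ u).length ∧
      ∀ k, pump st m k u = pump st m k v ↔ pump st m k u' = pump st m k v' := by
  rcases u with _ | ⟨_ | d, u⟩
  · obtain rfl := eq_nil_of_pump_eq_nil hm hk₁ h₁.symm
    exact .inl fun _ ↦ rfl
  · exact pump_none_cons_eq_or_exists_shorter hm hst hk₁ hk₂ hk h₁ h₂
  rcases v with _ | ⟨_ | d', v⟩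
  · simp at h₁
  · refine (pump_none_cons_eq_or_exists_shorter hm hst hk₁ hk₂ hk h₁.symm h₂.symm).imp
      (fun h k ↦ (h k).symm) ?_
    rintro ⟨v', u', hlt, heq⟩
    exact ⟨u', v', by rwa [← (heq k₁).1 h₁.symm, h₁],
      fun k ↦ eq_comm.trans ((heq k).trans eq_comm)⟩
  · obtain ⟨rfl, -⟩ := List.cons.inj h₁
    exact .inr ⟨u, v, by simp, fun k ↦ by simp⟩

theorem pump_eq_of_pump_eq_of_pump_eq (hm : 0 < m) (hst : Function.Periodic st m) {k₁ k₂ : ℕ}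
    (hk₁ : 1 ≤ k₁) (hk₂ : 1 ≤ k₂) (hk : k₁ ≠ k₂) {u v : List (Option α)}
    (h₁ : pump st m k₁ u = pump st m k₁ v) (h₂ : pump st m k₂ u = pump st m k₂ v) (k : ℕ) :
    pump st m k u = pump st m k v := by
  induction hn : (pump st m k₁ u).length using Nat.strong_induction_on generalizing u v with
  | _ n ih =>
  subst hn
  rcases pump_eq_or_exists_shorter hm hst hk₁ hk₂ hk h₁ h₂ with h | ⟨u', v', hlt, heq⟩
  · exact h k
  · exact (heq k).2 (ih _ hlt ((heq k₁).1 h₁) ((heq k₂).1 h₂) rfl)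

end Pumping

section Periodic

/-- The infinite word `C C C ⋯`; it is constantly `0` for `C = []`. -/
def repeatForever (C : List ℤ) (n : ℕ) : ℤ := C.getD (n % C.length) 0

lemma periodic_repeatForever (C : List ℤ) : Function.Periodic (repeatForever C) C.length :=
  fun n ↦ by simp [repeatForever]

lemma eq_segment_of_prefix_append {C f : List ℤ} (hC : C ≠ []) (h : f <+: C ++ f) :
    f = segment (repeatForever C) 0 f.length := by
  have hpos : 0 < C.length := List.length_pos_iff.2 hC
  have hget (n : ℕ) (hn : n < f.length) : f[n]? = some (repeatForever C n) := by
    induction n using Nat.strong_induction_on with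
    | _ n ih =>
    rw [List.getElem?_eq_getElem hn, ← List.prefix_iff_getElem?.1 h n hn, List.getElem?_append]
    split_ifs with hlt
    · simp [repeatForever, Nat.mod_eq_of_lt hlt, hlt]
    · rw [ih _ (by omega) (by omega), ← periodic_repeatForever C (n - C.length),
        Nat.sub_add_cancel (by omega)]
  refine List.ext_getElem? fun n ↦ ?_
  by_cases hn : n < f.length
  · rw [hget n hn, getElem?_segment _ hn, zero_add]
  · rw [List.getElem?_eq_none (by omega), List.getElem?_eq_none (by simpa using hn)]

/-- The expansion of `U` under the gaps `[]` and a prefix of `C C C ⋯` whose length has remainder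
`r` modulo the length of `C`, with a hole in place of the full periods. -/
def expandWithHoles (C : List ℤ) (r : ℕ) (U : List Token) : List (Option ℤ) :=
  U.flatMap fun t ↦
    (bif t.1 then none :: (segment (repeatForever C) 0 r).map some else []) ++ [some t.2]

lemma pump_expandWithHoles {C f : List ℤ} (hC : C ≠ []) (h : f <+: C ++ f) (U : List Token) :
    pump (repeatForever C) C.length (f.length / C.length)
      (expandWithHoles C (f.length % C.length) U) = expand (gapPair [] f) U := by
  have hf := eq_segment_of_prefix_append hC h
  conv_rhs at hf => rw [← Nat.div_add_mod f.length C.length,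
    segment_mul_add (periodic_repeatForever C)]
  generalize f.length / C.length = k at *
  generalize f.length % C.length = r at *
  induction U with
  | nil => rfl
  | cons t U ih =>
    rw [expandWithHoles, List.flatMap_cons, ← expandWithHoles, pump_append, pump_append, ih,
      expand_cons]
    obtain ⟨_ | _, d⟩ := t
    · simp
    · simp [← hf]

theorem expand_eq_of_periodic {C f₁ f₂ f₃ : List ℤ} (hC : C ≠ []) (h₁ : f₁ <+: C ++ f₁)
    (h₂ : f₂ <+: C ++ f₂) (h₃ : f₃ <+: C ++ f₃) (hlen₂ : C.length ≤ f₂.length)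
    (hlen₃ : C.length ≤ f₃.length) (hmod₂ : f₁.length % C.length = f₂.length % C.length)
    (hmod₃ : f₁.length % C.length = f₃.length % C.length) (hne : f₂.length ≠ f₃.length)
    {U V : List Token} (heq₂ : expand (gapPair [] f₂) U = expand (gapPair [] f₂) V)
    (heq₃ : expand (gapPair [] f₃) U = expand (gapPair [] f₃) V) :
    expand (gapPair [] f₁) U = expand (gapPair [] f₁) V := by
  have hpos : 0 < C.length := List.length_pos_iff.2 hC
  simp only [← pump_expandWithHoles hC h₂, ← hmod₂] at heq₂
  simp only [← pump_expandWithHoles hC h₃, ← hmod₃] at heq₃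
  simp only [← pump_expandWithHoles hC h₁]
  refine pump_eq_of_pump_eq_of_pump_eq hpos (periodic_repeatForever C) (Nat.div_pos hlen₂ hpos)
    (Nat.div_pos hlen₃ hpos) (fun hdiv ↦ hne ?_) heq₂ heq₃ _
  rw [← Nat.div_add_mod f₂.length C.length, ← Nat.div_add_mod f₃.length C.length, hdiv, ← hmod₂,
    hmod₃]

end Periodic

section Constant

lemma replicate_append_cons_inj {α : Type*} {c d d' : α} {n n' : ℕ} {l l' : List α} (hd : d ≠ c)
    (hd' : d' ≠ c) (h : List.replicate n c ++ d :: l = List.replicate n' c ++ d' :: l') :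
    n = n' ∧ d = d' ∧ l = l' := by
  induction n generalizing n' with
  | zero =>
    cases n' with
    | zero => simpa using h
    | succ n' => exact absurd (List.cons.inj h).1 hd
  | succ n ih =>
    cases n' with
    | zero => exact absurd (List.cons.inj h).1.symm hd'
    | succ n' =>
      simp only [List.replicate_succ, List.cons_append, List.cons.injEq, true_and] at h
      exact (ih h).imp_left (congrArg (· + 1))

lemma replicate_ne_replicate_append_cons {α : Type*} {c d : α} (hd : d ≠ c) (n n' : ℕ)
    (l : List α) : List.replicate n c ≠ List.replicate n' c ++ d :: l := fun h ↦
  hd (List.eq_of_mem_replicate (n := n) (by simp [h]))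

lemma eq_and_eq_of_coprime_of_mul_eq {i j i' j' : ℕ} (hi : 0 < i) (h : Nat.Coprime i j)
    (h' : Nat.Coprime i' j') (heq : i * j' = i' * j) : i = i' ∧ j = j' := by
  obtain rfl : i = i' := Nat.dvd_antisymm (h.dvd_of_dvd_mul_right ⟨j', heq.symm⟩)
    (h'.dvd_of_dvd_mul_right ⟨j, heq⟩)
  exact ⟨rfl, (Nat.eq_of_mul_eq_mul_left hi heq).symm⟩

lemma eq_and_eq_of_linear_eq {i j i' j' : ℕ} (hi : 0 < i) (h : Nat.Coprime i j)
    (h' : Nat.Coprime i' j') (hne : (i, j) ≠ (i', j')) {A B A' B' : ℕ}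
    (heq : A * i + B * j = A' * i + B' * j) (heq' : A * i' + B * j' = A' * i' + B' * j') :
    A = A' ∧ B = B' := by
  have hdet : (i : ℤ) * j' - i' * j ≠ 0 := fun hdet ↦ hne <| by
    obtain ⟨rfl, rfl⟩ := eq_and_eq_of_coprime_of_mul_eq hi h h' (by zify; linarith)
    rfl
  zify at heq heq' ⊢
  have hA : ((A : ℤ) - A') * (i * j' - i' * j) = 0 := by linear_combination j' * heq - j * heq'
  have hB : ((B : ℤ) - B') * (i * j' - i' * j) = 0 := by linear_combination i * heq' - i' * heq
  exact ⟨sub_eq_zero.1 ((mul_eq_zero.1 hA).resolve_right hdet),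
    sub_eq_zero.1 ((mul_eq_zero.1 hB).resolve_right hdet)⟩

/-- The expansion of `U` under the constant gaps `c^a` and `c^b`, preceded by `A` copies of
`c^(a+1)` and `B` copies of `c^(b+1)`. -/
def constExpand (c : ℤ) (A B : ℕ) (U : List Token) (a b : ℕ) : List ℤ :=
  List.replicate (A * (a + 1) + B * (b + 1)) c ++
    expand (gapPair (List.replicate a c) (List.replicate b c)) U

lemma constExpand_cons_self (c : ℤ) (A B : ℕ) (i : Bool) (U : List Token) (a b : ℕ) :
    constExpand c A B ((i, c) :: U) a b =
      constExpand c (A + (!i).toNat) (B + i.toNat) U a b := by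
  rw [constExpand, expand_cons, constExpand, ← List.singleton_append, ← List.replicate_one,
    ← List.append_assoc, ← List.append_assoc]
  cases i <;> simp only [gapPair_false, gapPair_true, List.replicate_append_replicate] <;>
    congr 2 <;> simp <;> ring

lemma exists_constExpand_cons (c : ℤ) (A B : ℕ) (i : Bool) (d : ℤ) (U : List Token) (a b : ℕ) :
    ∃ n, n + 1 = (A + (!i).toNat) * (a + 1) + (B + i.toNat) * (b + 1) ∧
      constExpand c A B ((i, d) :: U) a b =
        List.replicate n c ++ d :: constExpand c 0 0 U a b := by
  refine ⟨A * (a + 1) + B * (b + 1) + bif i then b else a, ?_, ?_⟩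
  · cases i <;> simp <;> ring
  · rw [constExpand, expand_cons, constExpand, ← List.append_assoc]
    cases i <;> simp [List.replicate_append_replicate]

lemma constExpand_nil_ne_cons {c d : ℤ} (hd : d ≠ c) (A B A' B' : ℕ) (i : Bool) (U : List Token)
    (a b : ℕ) : constExpand c A B [] a b ≠ constExpand c A' B' ((i, d) :: U) a b := by
  obtain ⟨n, -, h⟩ := exists_constExpand_cons c A' B' i d U a b
  rw [h, constExpand, expand_nil, List.append_nil]
  exact replicate_ne_replicate_append_cons hd _ _ _

lemma constExpand_cons_inj {c d d' : ℤ} (hd : d ≠ c) (hd' : d' ≠ c) {A B A' B' : ℕ} {i i' : Bool}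
    {U V : List Token} {a b : ℕ}
    (h : constExpand c A B ((i, d) :: U) a b = constExpand c A' B' ((i', d') :: V) a b) :
    (A + (!i).toNat) * (a + 1) + (B + i.toNat) * (b + 1) =
        (A' + (!i').toNat) * (a + 1) + (B' + i'.toNat) * (b + 1) ∧
      d = d' ∧ constExpand c 0 0 U a b = constExpand c 0 0 V a b := by
  obtain ⟨n, hn, hU⟩ := exists_constExpand_cons c A B i d U a b
  obtain ⟨n', hn', hV⟩ := exists_constExpand_cons c A' B' i' d' V a b
  rw [hU, hV] at h
  exact (replicate_append_cons_inj hd hd' h).imp_left fun h ↦ by rw [← hn, ← hn', h]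

lemma constExpand_congr_cons {c d : ℤ} {A B A' B' : ℕ} {i i' : Bool} {U V : List Token} {a b : ℕ}
    (hA : A + (!i).toNat = A' + (!i').toNat) (hB : B + i.toNat = B' + i'.toNat)
    (h : constExpand c 0 0 U a b = constExpand c 0 0 V a b) :
    constExpand c A B ((i, d) :: U) a b = constExpand c A' B' ((i', d) :: V) a b := by
  obtain ⟨n, hn, hU⟩ := exists_constExpand_cons c A B i d U a b
  obtain ⟨n', hn', hV⟩ := exists_constExpand_cons c A' B' i' d V a b
  rw [hU, hV, h, show n = n' by rw [hA, hB] at hn; omega]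

variable {c : ℤ} {a b a' b' : ℕ}

theorem constExpand_eq_of_constExpand_eq (hco : Nat.Coprime (a + 1) (b + 1))
    (hco' : Nat.Coprime (a' + 1) (b' + 1)) (hne : (a, b) ≠ (a', b')) {A B A' B' : ℕ}
    {U V : List Token} (h : constExpand c A B U a b = constExpand c A' B' V a b)
    (h' : constExpand c A B U a' b' = constExpand c A' B' V a' b') :
    constExpand c A B U = constExpand c A' B' V := by
  induction hn : U.length + V.length using Nat.strong_induction_on generalizing A B A' B' U V with
  | _ n ih =>
  subst hn
  have hlin {A B A' B' : ℕ} := eq_and_eq_of_linear_eq (A := A) (B := B) (A' := A') (B' := B')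
    (Nat.succ_pos a) hco hco' (by simpa using hne)
  rcases U with _ | ⟨⟨i, d⟩, U⟩
  · rcases V with _ | ⟨⟨i', d'⟩, V⟩
    · have hlen := congrArg List.length h
      have hlen' := congrArg List.length h'
      simp only [constExpand, expand_nil, List.append_nil, List.length_replicate] at hlen hlen'
      obtain ⟨rfl, rfl⟩ := hlin hlen hlen'
      rfl
    · obtain rfl | hd' := eq_or_ne d' c
      · rw [constExpand_cons_self] at h h'
        exact (ih _ (by simp) h h' rfl).trans (funext₂ fun _ _ ↦ (constExpand_cons_self ..).symm)
      · exact (constExpand_nil_ne_cons hd' _ _ _ _ _ _ _ _ h).elim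
  obtain rfl | hd := eq_or_ne d c
  · rw [constExpand_cons_self] at h h'
    exact (funext₂ fun _ _ ↦ constExpand_cons_self ..).trans (ih _ (by simp) h h' rfl)
  rcases V with _ | ⟨⟨i', d'⟩, V⟩
  · exact (constExpand_nil_ne_cons hd _ _ _ _ _ _ _ _ h.symm).elim
  obtain rfl | hd' := eq_or_ne d' c
  · rw [constExpand_cons_self _ A'] at h h'
    exact (ih _ (by simp) h h' rfl).trans (funext₂ fun _ _ ↦ (constExpand_cons_self ..).symm)
  · obtain ⟨hlen, rfl, hUV⟩ := constExpand_cons_inj hd hd' h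
    obtain ⟨hlen', -, hUV'⟩ := constExpand_cons_inj hd hd' h'
    obtain ⟨hA, hB⟩ := hlin hlen hlen'
    exact funext₂ fun x y ↦ constExpand_congr_cons hA hB
      (congrFun₂ (ih _ (by simp; omega) hUV hUV' rfl) x y)

theorem expand_eq_of_replicate (hco : Nat.Coprime (a + 1) (b + 1))
    (hco' : Nat.Coprime (a' + 1) (b' + 1)) (hne : (a, b) ≠ (a', b')) {U V : List Token}
    (h : expand (gapPair (List.replicate a c) (List.replicate b c)) U =
      expand (gapPair (List.replicate a c) (List.replicate b c)) V)
    (h' : expand (gapPair (List.replicate a' c) (List.replicate b' c)) U =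
      expand (gapPair (List.replicate a' c) (List.replicate b' c)) V) (x y : ℕ) :
    expand (gapPair (List.replicate x c) (List.replicate y c)) U =
      expand (gapPair (List.replicate x c) (List.replicate y c)) V := by
  have hconst (x y : ℕ) (U : List Token) : constExpand c 0 0 U x y =
      expand (gapPair (List.replicate x c) (List.replicate y c)) U := by
    simp [constExpand]
  simp only [← hconst] at h h' ⊢
  exact congrFun₂ (constExpand_eq_of_constExpand_eq hco hco' hne h h') x y

end Constant

/-- The parameters of a normal form whose two gap words have coprime degrees, the first of them
being the smaller one. -/
@[ext]
structure NormData where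
  s : ℤ
  t : ℤ
  e : List ℤ
  f : List ℤ
  length_le : e.length ≤ f.length
  coprime : Nat.Coprime (e.length + 1) (f.length + 1)

/-- The number of colours for the normal forms solving an equation in which every
unknown occurs at most `μ` times on each side: one for the constant gaps and `2 * μ` for the
periodic ones, which do not arise for `μ = 1`. -/
def colourBound (μ : ℕ) : ℕ := if μ = 1 then 1 else 2 * μ + 1

namespace NormData

variable {D D' D₁ D₂ D₃ : NormData} {r p : Fin 3} {s t c : ℤ} {C : List ℤ}

/-- The normal form with parameters `D`, for the unknowns `r` and `p` in their distinguished
roles. -/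
def assignment (D : NormData) (r p : Fin 3) : Fin 3 → F₂ := normForm r p D.s D.t D.e D.f

/-- The normal form with parameters `D` solves the equation `u = v`. -/
def Solves (D : NormData) (r p : Fin 3) (u v : List (Fin 3)) : Prop :=
  evalWord (D.assignment r p) u = evalWord (D.assignment r p) v

/-- Both gaps of `D` are powers of the letter `c`. -/
def IsConstant (D : NormData) (c : ℤ) : Prop :=
  D.e = List.replicate D.e.length c ∧ D.f = List.replicate D.f.length c

instance : DecidablePred (IsConstant · c) := fun _ ↦ inferInstanceAs (Decidable (_ ∧ _))

/-- The constraint on `D` imposed by a single equation, with `s`, `t`, `c`, `C` depending only on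
that equation: either the first gap is empty and the second is periodic with period `c :: C`, or
both gaps are powers of `c`. -/
structure Fits (D : NormData) (s t c : ℤ) (C : List ℤ) : Prop where
  s_eq : D.s = s
  t_eq : D.t = t
  prefix_append : D.e = [] → D.f <+: (c :: C) ++ D.f
  isConstant : D.e ≠ [] → D.IsConstant c

lemma exists_forall_fits (hrp : r ≠ p) {u v : List (Fin 3)} (hperm : u.Perm v) (hne : u ≠ v)
    {μ : ℕ} (hμ : 1 ≤ μ) (hμp : u.count p ≤ μ) :
    ∃ s t c C, C.length + 1 ≤ μ ∧ ∀ D : NormData, D.Solves r p u v → D.Fits s t c C := by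
  obtain ⟨s, t, c, C, hC, h⟩ := exists_forall_normForm hrp hperm hne hμ hμp
  refine ⟨s, t, c, C, hC, fun D hD ↦ ?_⟩
  obtain ⟨hs, ht, hnil, hconst⟩ := h D.length_le D.coprime hD
  exact ⟨hs, ht, hnil, hconst⟩

lemma Fits.e_eq_nil (h : D.Fits s t c C) (hD : ¬ D.IsConstant c) : D.e = [] :=
  not_not.1 (mt h.isConstant hD)

lemma Fits.prefix_append_of_not_isConstant (h : D.Fits s t c C) (hD : ¬ D.IsConstant c) :
    D.f <+: (c :: C) ++ D.f :=
  h.prefix_append (h.e_eq_nil hD)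

lemma Fits.isConstant_of_nil (h : D.Fits s t c []) : D.IsConstant c := by
  by_contra hD
  refine hD ⟨by simp [h.e_eq_nil hD], List.eq_replicate_iff.2 ⟨rfl, ?_⟩⟩
  exact forall_mem_of_prefix_append (h.prefix_append_of_not_isConstant hD) (by simp) (by simp)

lemma Fits.eq_of_length_eq (h : D.Fits s t c C) (h' : D'.Fits s t c C)
    (he : D.e.length = D'.e.length) (hf : D.f.length = D'.f.length) : D = D' := by
  suffices D.e = D'.e ∧ D.f = D'.f from
    NormData.ext (h.s_eq.trans h'.s_eq.symm) (h.t_eq.trans h'.t_eq.symm) this.1 this.2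
  by_cases hnil : D.e = []
  · have hnil' : D'.e = [] := by simpa [hnil, eq_comm] using he
    refine ⟨hnil.trans hnil'.symm, ?_⟩
    rw [eq_segment_of_prefix_append (by simp) (h.prefix_append hnil),
      eq_segment_of_prefix_append (by simp) (h'.prefix_append hnil'), hf]
  · have hnil' : D'.e ≠ [] := fun hnil' ↦ hnil (by simpa [hnil'] using he)
    obtain ⟨hce, hcf⟩ := h.isConstant hnil
    obtain ⟨hce', hcf'⟩ := h'.isConstant hnil'
    exact ⟨by rw [hce, hce', he], by rw [hcf, hcf', hf]⟩

/-- Normal forms of the same colour that solve an equation are so closely related that any two of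
them determine the equations solved by a third one, see `Fits.solves_of_colour_eq`. -/
def colour (c : ℤ) (C : List ℤ) (D : NormData) : ℕ :=
  if D.IsConstant c then 0
  else if D.f.length < C.length + 1 then 1 + D.f.length
  else 1 + (C.length + 1) + D.f.length % (C.length + 1)

lemma colour_eq_zero_iff : D.colour c C = 0 ↔ D.IsConstant c := by
  unfold colour
  split_ifs with h <;> simp [h]

lemma Fits.colour_lt (h : D.Fits s t c C) {μ : ℕ} (hC : C.length + 1 ≤ μ) :
    D.colour c C < colourBound μ := by
  have hmod : D.f.length % (C.length + 1) < C.length + 1 := Nat.mod_lt _ (Nat.succ_pos _)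
  by_cases hD : D.IsConstant c
  · rw [colour_eq_zero_iff.2 hD, colourBound]
    split_ifs <;> omega
  · have hC₀ : C.length ≠ 0 := fun hC₀ ↦ by
      obtain rfl := List.length_eq_zero_iff.1 hC₀
      exact hD h.isConstant_of_nil
    rw [colour, colourBound, if_neg hD, if_neg (by omega : μ ≠ 1)]
    split_ifs <;> omega

lemma Fits.length_f_ne (h : D.Fits s t c C) (h' : D'.Fits s t c C) (hD : ¬ D.IsConstant c)
    (hD' : ¬ D'.IsConstant c) (hne : D ≠ D') : D.f.length ≠ D'.f.length := fun hf ↦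
  hne (h.eq_of_length_eq h' (by rw [h.e_eq_nil hD, h'.e_eq_nil hD']) hf)

lemma Fits.length_ne (h : D.Fits s t c C) (h' : D'.Fits s t c C) (hne : D ≠ D') :
    (D.e.length, D.f.length) ≠ (D'.e.length, D'.f.length) := fun heq ↦
  hne (h.eq_of_length_eq h' (congrArg Prod.fst heq) (congrArg Prod.snd heq))

variable {U V : List Token}

lemma Fits.expand_eq_of_colour_eq (h₁ : D₁.Fits s t c C) (h₂ : D₂.Fits s t c C)
    (h₃ : D₃.Fits s t c C) (hcol₂ : D₁.colour c C = D₂.colour c C)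
    (hcol₃ : D₁.colour c C = D₃.colour c C) (hne : D₂ ≠ D₃)
    (heq₂ : expand (gapPair D₂.e D₂.f) U = expand (gapPair D₂.e D₂.f) V)
    (heq₃ : expand (gapPair D₃.e D₃.f) U = expand (gapPair D₃.e D₃.f) V) :
    expand (gapPair D₁.e D₁.f) U = expand (gapPair D₁.e D₁.f) V := by
  have hD₂ : D₂.IsConstant c ↔ D₁.IsConstant c := by
    rw [← colour_eq_zero_iff (C := C), ← hcol₂, colour_eq_zero_iff]
  have hD₃ : D₃.IsConstant c ↔ D₁.IsConstant c := by
    rw [← colour_eq_zero_iff (C := C), ← hcol₃, colour_eq_zero_iff]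
  by_cases hD : D₁.IsConstant c
  · rw [hD.1, hD.2]
    rw [(hD₂.2 hD).1, (hD₂.2 hD).2] at heq₂
    rw [(hD₃.2 hD).1, (hD₃.2 hD).2] at heq₃
    exact expand_eq_of_replicate D₂.coprime D₃.coprime (h₂.length_ne h₃ hne) heq₂ heq₃ _ _
  · have hD₂ := mt hD₂.1 hD
    have hD₃ := mt hD₃.1 hD
    have hlen := h₂.length_f_ne h₃ hD₂ hD₃ hne
    have hmod (n : ℕ) : n % (C.length + 1) < C.length + 1 := Nat.mod_lt n (Nat.succ_pos _)
    obtain ⟨hlen₂, hlen₃, hmod₂, hmod₃⟩ : C.length + 1 ≤ D₂.f.length ∧ C.length + 1 ≤ D₃.f.length ∧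
        D₁.f.length % (C.length + 1) = D₂.f.length % (C.length + 1) ∧
        D₁.f.length % (C.length + 1) = D₃.f.length % (C.length + 1) := by
      have := hmod D₁.f.length
      have := hmod D₂.f.length
      have := hmod D₃.f.length
      simp only [colour, hD, hD₂, hD₃, if_false] at hcol₂ hcol₃
      split_ifs at hcol₂ hcol₃ <;> omega
    rw [h₂.e_eq_nil hD₂] at heq₂
    rw [h₃.e_eq_nil hD₃] at heq₃
    rw [h₁.e_eq_nil hD]
    exact expand_eq_of_periodic (by simp) (h₁.prefix_append_of_not_isConstant hD)
      (h₂.prefix_append_of_not_isConstant hD₂) (h₃.prefix_append_of_not_isConstant hD₃)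
      hlen₂ hlen₃ hmod₂ hmod₃ hlen heq₂ heq₃

theorem Fits.solves_of_colour_eq (h₁ : D₁.Fits s t c C) (h₂ : D₂.Fits s t c C)
    (h₃ : D₃.Fits s t c C) (hcol₂ : D₁.colour c C = D₂.colour c C)
    (hcol₃ : D₁.colour c C = D₃.colour c C) (hne : D₂ ≠ D₃) {w w' : List (Fin 3)}
    (heq₂ : D₂.Solves r p w w') (heq₃ : D₃.Solves r p w w') : D₁.Solves r p w w' := by
  simp only [Solves, assignment, normForm, evalWord_standardForm_eq_iff, h₁.s_eq, h₁.t_eq,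
    h₂.s_eq, h₂.t_eq, h₃.s_eq, h₃.t_eq] at heq₂ heq₃ ⊢
  exact ⟨heq₂.1, h₁.expand_eq_of_colour_eq h₂ h₃ hcol₂ hcol₃ hne heq₂.2 heq₃.2⟩

end NormData

section Counting

variable {Λ : Type*} [DecidableEq Λ]

/-- The difference between the numbers of occurrences of an unknown on the two sides of an
equation. -/
def countDiff (E : List Λ × List Λ) (l : Λ) : ℤ := E.1.count l - E.2.count l

lemma countDiff_eq_zero_iff {E : List Λ × List Λ} : countDiff E = 0 ↔ E.1.Perm E.2 := by
  simp only [funext_iff, countDiff, Pi.zero_apply, sub_eq_zero, Nat.cast_inj, List.perm_iff_count]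

variable [Fintype Λ]

lemma sum_map_eq_sum_count {M : Type*} [AddCommMonoid M] (f : Λ → M) (w : List Λ) :
    (w.map f).sum = ∑ l, w.count l • f l := by
  rw [Finset.sum_list_map_count]
  refine Finset.sum_subset (Finset.subset_univ _) fun l _ hl ↦ ?_
  rw [List.count_eq_zero.2 (by simpa using hl), zero_smul]

lemma sum_map_eq_iff_dotProduct_eq_zero {E : List Λ × List Λ} (f : Λ → ℤ) :
    (E.1.map f).sum = (E.2.map f).sum ↔ countDiff E ⬝ᵥ f = 0 := by
  simp only [sum_map_eq_sum_count, dotProduct, countDiff, sub_mul, Finset.sum_sub_distrib,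
    sub_eq_zero, nsmul_eq_mul]

lemma dotProduct_toAdd_eq_zero {G : Type*} [Group G] {E : List Λ × List Λ} {ψ : Λ → G}
    (h : evalWord ψ E.1 = evalWord ψ E.2) (θ : G →* Multiplicative ℤ) :
    countDiff E ⬝ᵥ (fun l ↦ (θ (ψ l)).toAdd) = 0 := by
  have hsum (w : List Λ) : (θ (evalWord ψ w)).toAdd = (w.map fun l ↦ (θ (ψ l)).toAdd).sum := by
    simp only [evalWord, map_list_prod, toAdd_list_sum, List.map_map, Function.comp_def]
  rw [← sum_map_eq_iff_dotProduct_eq_zero, ← hsum, ← hsum, h]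

lemma card_le_of_triangular {R ι κ : Type*} [CommRing R] [IsDomain R] [Fintype ι] [LinearOrder ι]
    [Fintype κ] {δ L : ι → κ → R} (hne : ∀ k, δ k ⬝ᵥ L k ≠ 0)
    (hlt : ∀ j k, j < k → δ j ⬝ᵥ L k = 0) : Fintype.card ι ≤ Fintype.card κ := by
  let M : Matrix ι ι R := Matrix.of fun k j ↦ δ j ⬝ᵥ L k
  have hdet : M.det ≠ 0 := by
    rw [Matrix.det_of_isUpperTriangular (M := M) fun k j hjk ↦ hlt j k hjk]
    exact Finset.prod_ne_zero_iff.2 fun k _ ↦ hne k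
  have hL : LinearIndependent R L :=
    .of_comp (Matrix.of δ).mulVecLin (Matrix.linearIndependent_rows_of_det_ne_zero hdet)
  simpa using hL.fintype_card_le_finrank

end Counting

section Exponents

/-- The total exponent of one of the generators in an element of `F₂`. -/
def exponent (i : Bool) : F₂ →* Multiplicative ℤ :=
  FreeGroup.lift fun x ↦ if x = i then .ofAdd 1 else 1

@[simp] lemma exponent_genA (i : Bool) : exponent i genA = bif i then 1 else .ofAdd 1 := by
  cases i <;> simp [exponent, genA]

@[simp] lemma exponent_genB (i : Bool) : exponent i genB = bif i then .ofAdd 1 else 1 := by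
  cases i <;> simp [exponent, genB]

lemma exponent_gapWord (e : List ℤ) : (exponent true (gapWord e)).toAdd = e.length + 1 := by
  induction e with
  | nil => simp
  | cons k e ih => simp [gapWord_cons, ih]; ring

end Exponents

lemma IsLabelling.sum_univ {x y z : Fin 3} (h : IsLabelling x y z) (f : Fin 3 → ℤ) :
    ∑ l, f l = f x + f y + f z := by
  have huniv : (Finset.univ : Finset (Fin 3)) = {x, y, z} := by
    ext l
    simpa using h.eq_or_eq_or_eq l
  rw [huniv, Finset.sum_insert (by simp [h.ne₁₂, h.ne₁₃]), Finset.sum_pair h.ne₂₃, add_assoc]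

lemma IsLabelling.eq_or_eq_swap {r p q p' q' : Fin 3} (h : IsLabelling r p q)
    (h' : IsLabelling r p' q') : (p = p' ∧ q = q') ∨ (p = q' ∧ q = p') := by
  obtain ⟨h₁, h₂, h₃⟩ := h
  obtain ⟨h₁', h₂', h₃'⟩ := h'
  revert r p q p' q'
  decide

namespace NormData

variable {D D' : NormData} {r p q p' q' : Fin 3} {u v : List (Fin 3)} {α β : Type*}
  {h : Fin 3 → List α} {h' : Fin 3 → List β}

lemma assignment_self (D : NormData) (r p : Fin 3) : D.assignment r p r = genA := if_pos rfl

lemma assignment_snd (D : NormData) (hl : IsLabelling r p q) :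
    D.assignment r p p = gapWord D.e := by
  simp [assignment, normForm, standardForm, hl.ne₁₂.symm]

lemma assignment_third (D : NormData) (hl : IsLabelling r p q) :
    D.assignment r p q = genA ^ D.s * gapWord D.f * genA ^ D.t := by
  have hqp : (q != p) = true := bne_iff_ne.2 hl.ne₂₃.symm
  simp [assignment, normForm, standardForm, hl.ne₁₃.symm, hqp]

lemma Solves.degree_eq (h : D.Solves r p u v) (hl : IsLabelling r p q) :
    countDiff (u, v) p * (D.e.length + 1) + countDiff (u, v) q * (D.f.length + 1) = 0 := by
  have hdot := dotProduct_toAdd_eq_zero (E := (u, v)) h (exponent true)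
  simpa [dotProduct, hl.sum_univ, assignment_self, D.assignment_snd hl, D.assignment_third hl,
    exponent_gapWord] using hdot

lemma Solves.perm (h : D.Solves r p u v) (hl : IsLabelling r p q)
    (hp : countDiff (u, v) p = 0) (hq : countDiff (u, v) q = 0) : u.Perm v := by
  have hdot := dotProduct_toAdd_eq_zero (E := (u, v)) h (exponent false)
  refine countDiff_eq_zero_iff.1 (hl.funext_iff.2 ⟨?_, hp, hq⟩)
  simpa [dotProduct, hl.sum_univ, hp, hq, assignment_self] using hdot

/-- The normal form `D`, with `r`, `p` and `q` in their distinguished roles, has the same kernel as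
the morphism `h`. The roles of `p` and `q` are made unique by ordering them when their degrees
agree. -/
structure IsNormalModel (D : NormData) (r p q : Fin 3) (h : Fin 3 → List α) : Prop where
  isLabelling : IsLabelling r p q
  lt_of_length_eq : D.e.length = D.f.length → p < q
  represents : Represents (D.assignment r p) h

lemma exists_assignment_eq {ψ : Fin 3 → F₂} (hl : IsLabelling r p q) (hr : ψ r = genA) {i j : ℕ}
    (hp : HasDegree i (ψ p)) (hq : HasDegree j (ψ q)) (hi : 0 < i) (hij : i ≤ j)
    (hco : Nat.Coprime i j) : ∃ (D : NormData) (θ : F₂ →* F₂), D.e.length + 1 = i ∧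
      D.f.length + 1 = j ∧ Function.Injective θ ∧ (fun l ↦ θ (ψ l)) = D.assignment r p := by
  obtain ⟨s, e, t, hψp, rfl⟩ := hp.exists_eq hi
  obtain ⟨s', f, t', hψq, rfl⟩ := hq.exists_eq (hi.trans_le hij)
  refine ⟨⟨s' - s, t' - t, e.map (· + (-s + -t)), f.map (· + (-s + -t)), by simpa using hij,
    by simpa using hco⟩, shiftHom (-s) (-t), by simp, by simp, shiftHom_injective _ _,
    hl.funext_iff.2 ⟨?_, ?_, ?_⟩⟩
  · simp [hr, assignment_self]
  · simp [hψp, assignment_snd _ hl, shiftHom_gapWord, ← mul_assoc]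
  · rw [assignment_third _ hl]
    simp only [hψq, map_mul, map_zpow, shiftHom_genA, shiftHom_gapWord, sub_eq_add_neg, zpow_add,
      mul_assoc, (Commute.refl genA).zpow_zpow (-t) t' |>.eq]

theorem exists_isNormalModel (hst : HasStandardModel h) :
    ∃ r p q D, IsNormalModel D r p q h := by
  obtain ⟨ψ, r, p, q, ⟨hl, hr, i, j, hp, hq, hi, hj, hco⟩, hrep⟩ := hst
  have exists_of_le {p q : Fin 3} {i j : ℕ} (hl : IsLabelling r p q) (hp : HasDegree i (ψ p))
      (hq : HasDegree j (ψ q)) (hi : 0 < i) (hco : Nat.Coprime i j) (hij : i ≤ j)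
      (hlt : i = j → p < q) : ∃ r p q D, IsNormalModel D r p q h := by
    obtain ⟨D, θ, rfl, rfl, hθ, hD⟩ := exists_assignment_eq hl hr hp hq hi hij hco
    exact ⟨r, p, q, D, hl, fun he ↦ hlt (congrArg (· + 1) he), hD ▸ hrep.comp_injective hθ⟩
  rcases lt_trichotomy i j with hij | rfl | hij
  · exact exists_of_le hl hp hq hi hco hij.le fun he ↦ absurd he hij.ne
  · rcases hl.ne₂₃.lt_or_gt with hpq | hpq
    · exact exists_of_le hl hp hq hi hco le_rfl fun _ ↦ hpq
    · exact exists_of_le hl.swap₂₃ hq hp hj hco.symm le_rfl fun _ ↦ hpq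
  · exact exists_of_le hl.swap₂₃ hq hp hj hco.symm hij.le fun he ↦ absurd he hij.ne

lemma length_eq_of_degree_eq {i j i' j' : ℕ} {A B : ℤ} (hAB : A ≠ 0 ∨ B ≠ 0)
    (h : A * (i + 1) + B * (j + 1) = 0) (h' : A * (i' + 1) + B * (j' + 1) = 0)
    (hco : Nat.Coprime (i + 1) (j + 1)) (hco' : Nat.Coprime (i' + 1) (j' + 1)) :
    i = i' ∧ j = j' := by
  have hA : A * ((i + 1) * (j' + 1) - (i' + 1) * (j + 1)) = 0 := by
    linear_combination (j' + 1) * h - (j + 1) * h'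
  have hB : B * ((i + 1) * (j' + 1) - (i' + 1) * (j + 1)) = 0 := by
    linear_combination (i + 1) * h' - (i' + 1) * h
  have hdet : ((i : ℤ) + 1) * (j' + 1) - (i' + 1) * (j + 1) = 0 :=
    hAB.elim (mul_eq_zero.1 hA).resolve_left (mul_eq_zero.1 hB).resolve_left
  obtain ⟨hi, hj⟩ := eq_and_eq_of_coprime_of_mul_eq i.succ_pos hco hco'
    (by zify; linarith)
  exact ⟨Nat.succ_injective hi, Nat.succ_injective hj⟩

theorem IsNormalModel.eq_of_not_perm (hD : IsNormalModel D r p q h)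
    (hD' : IsNormalModel D' r p' q' h') (hperm : ¬ u.Perm v) (hs : D.Solves r p u v)
    (hs' : D'.Solves r p' u v) :
    p = p' ∧ D.e.length = D'.e.length ∧ D.f.length = D'.f.length := by
  have hne : countDiff (u, v) p ≠ 0 ∨ countDiff (u, v) q ≠ 0 := by
    by_contra! hzero
    exact hperm (hs.perm hD.isLabelling hzero.1 hzero.2)
  have hdeg := hs.degree_eq hD.isLabelling
  have hdeg' := hs'.degree_eq hD'.isLabelling
  obtain ⟨rfl, rfl⟩ | ⟨rfl, rfl⟩ := hD.isLabelling.eq_or_eq_swap hD'.isLabelling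
  · exact ⟨rfl, length_eq_of_degree_eq hne hdeg hdeg' D.coprime D'.coprime⟩
  · rw [add_comm] at hdeg'
    obtain ⟨he, hf⟩ := length_eq_of_degree_eq hne hdeg hdeg' D.coprime D'.coprime.symm
    have hle := D.length_le
    have hle' := D'.length_le
    exact absurd (hD.lt_of_length_eq (by omega)) (hD'.lt_of_length_eq (by omega)).asymm

end NormData

section Separating

variable {ι α : Type*} {n : ℕ}

/-- The morphism `h` solves the equation `E`. -/
def IsSolution (h : Fin n → List α) (E : List (Fin n) × List (Fin n)) : Prop :=
  mApply h E.1 = mApply h E.2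

/-- Each `h k` solves the equations before `E k` but not `E k`: such a family `h` of morphisms
witnesses that the equations `E` form a chain. -/
structure IsSeparating [LT ι] (E : ι → List (Fin n) × List (Fin n)) (h : ι → Fin n → List α) :
    Prop where
  isSolution : ∀ ⦃j k⦄, j < k → IsSolution (h k) (E j)
  not_isSolution : ∀ k, ¬ IsSolution (h k) (E k)

namespace IsSeparating

variable {E : ι → List (Fin n) × List (Fin n)} {h : ι → Fin n → List α}

lemma subtype [LT ι] (H : IsSeparating E h) (P : ι → Prop) :
    IsSeparating (fun k : {k // P k} ↦ E k) fun k ↦ h k :=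
  ⟨fun _ _ hjk ↦ H.isSolution hjk, fun k ↦ H.not_isSolution k⟩

variable [LinearOrder ι]

lemma eq_of_kernel_eq (H : IsSeparating E h) {k k' : ι}
    (hker : ∀ w w', mApply (h k) w = mApply (h k) w' ↔ mApply (h k') w = mApply (h k') w') :
    k = k' := by
  rcases lt_trichotomy k k' with hlt | heq | hgt
  · exact absurd ((hker _ _).2 (H.isSolution hlt)) (H.not_isSolution k)
  · exact heq
  · exact absurd ((hker _ _).1 (H.isSolution hgt)) (H.not_isSolution k')

lemma eq_of_represents (H : IsSeparating E h) {G : Type*} [Group G] {ψ : Fin n → G} {k k' : ι}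
    (hk : Represents ψ (h k)) (hk' : Represents ψ (h k')) : k = k' :=
  H.eq_of_kernel_eq fun w w' ↦ (hk w w').trans (hk' w w').symm

end IsSeparating

end Separating

section Commuting

variable {ι α : Type*} {n : ℕ} {h : Fin n → List α} {E : List (Fin n) × List (Fin n)}

lemma length_mApply_eq_iff : (mApply h E.1).length = (mApply h E.2).length ↔
    countDiff E ⬝ᵥ (fun l ↦ ((h l).length : ℤ)) = 0 := by
  have hlen (w : List (Fin n)) :
      ((mApply h w).length : ℤ) = (w.map fun l ↦ ((h l).length : ℤ)).sum := by
    simp [mApply, List.length_flatten, Function.comp_def]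
  rw [← sum_map_eq_iff_dotProduct_eq_zero, ← hlen, ← hlen, Nat.cast_inj]

lemma IsSolution.dotProduct_length_eq_zero (hE : IsSolution h E) :
    countDiff E ⬝ᵥ (fun l ↦ ((h l).length : ℤ)) = 0 :=
  length_mApply_eq_iff.1 (congrArg List.length hE)

lemma IsCommuting.isSolution_of_dotProduct_length_eq_zero (hc : IsCommuting h)
    (hE : countDiff E ⬝ᵥ (fun l ↦ ((h l).length : ℤ)) = 0) : IsSolution h E :=
  (List.append_inj (hc.mApply_append_mApply _ _) (length_mApply_eq_iff.2 hE)).1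

namespace IsSeparating

variable [Fintype ι] [LinearOrder ι] {E : ι → List (Fin n) × List (Fin n)}
  {h : ι → Fin n → List α}

lemma card_le_of_isCommuting (H : IsSeparating E h) (hc : ∀ k, IsCommuting (h k)) :
    Fintype.card ι ≤ n := by
  simpa using card_le_of_triangular
    (fun k hk ↦ H.not_isSolution k ((hc k).isSolution_of_dotProduct_length_eq_zero hk))
    (fun j k hjk ↦ (H.isSolution hjk).dotProduct_length_eq_zero)

lemma card_add_one_le_of_isCommuting (H : IsSeparating E h) (hc : ∀ k, IsCommuting (h k))
    {E₀ : List (Fin n) × List (Fin n)} (hperm : ¬ E₀.1.Perm E₀.2)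
    (hsol : ∀ k, IsSolution (h k) E₀) : Fintype.card ι + 1 ≤ n := by
  let δ : WithBot ι → Fin n → ℤ := WithBot.recBotCoe (countDiff E₀) fun k ↦ countDiff (E k)
  let L : WithBot ι → Fin n → ℤ := WithBot.recBotCoe (countDiff E₀) fun k l ↦ (h k l).length
  have hne (k : WithBot ι) : δ k ⬝ᵥ L k ≠ 0 := by
    induction k with
    | bot => exact fun hzero ↦ hperm (countDiff_eq_zero_iff.1 (dotProduct_self_eq_zero.1 hzero))
    | coe k =>
      exact fun hk ↦ H.not_isSolution k ((hc k).isSolution_of_dotProduct_length_eq_zero hk)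
  have hlt (j k : WithBot ι) (hjk : j < k) : δ j ⬝ᵥ L k = 0 := by
    induction k with
    | bot => exact absurd hjk not_lt_bot
    | coe k =>
      induction j with
      | bot => exact (hsol k).dotProduct_length_eq_zero
      | coe j => exact (H.isSolution (WithBot.coe_lt_coe.1 hjk)).dotProduct_length_eq_zero
  have hcard := card_le_of_triangular hne hlt
  rwa [Fintype.card_fin, show Fintype.card (WithBot ι) = _ from Fintype.card_option] at hcard

end IsSeparating

end Commuting

section Erasing

variable {ι α : Type*}

lemma mApply_eq_mApply_iff_of_eq_nil {h : Fin 3 → List α} {x y z : Fin 3}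
    (hl : IsLabelling x y z) (hx : h x = []) (hc : ¬ IsCommuting h) (w w' : List (Fin 3)) :
    mApply h w = mApply h w' ↔
      (w.filter (· ≠ x)).map (· == z) = (w'.filter (· ≠ x)).map (· == z) := by
  let f : Bool → List α := fun i ↦ bif i then h z else h y
  have hf : f false ++ f true ≠ f true ++ f false := fun hyz ↦ hc <| by
    have hyz : h y ++ h z = h z ++ h y := hyz
    simp [IsCommuting, hl.forall_iff, hx, hyz]
  have hmApply (w : List (Fin 3)) :
      mApply h w = ((w.filter (· ≠ x)).map (· == z)).flatMap f := by
    induction w with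
    | nil => rfl
    | cons l w ih =>
      rw [mApply_cons, ih]
      rcases hl.eq_or_eq_or_eq l with rfl | rfl | rfl
      · simp [hx]
      · simp [f, hl.ne₁₂.symm, beq_eq_false_iff_ne.2 hl.ne₂₃]
      · simp [f, hl.ne₁₃.symm]
  rw [hmApply, hmApply, (flatMap_injective_of_append_ne hf).eq_iff]

lemma IsSeparating.card_le_of_erasing [Fintype ι] [LinearOrder ι]
    {E : ι → List (Fin 3) × List (Fin 3)} {h : ι → Fin 3 → List α} (H : IsSeparating E h)
    (hc : ∀ k, ¬ IsCommuting (h k)) (hnil : ∀ k, ∃ x, h k x = []) : Fintype.card ι ≤ 3 := by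
  choose x hx using hnil
  suffices Function.Injective x by simpa using Fintype.card_le_of_injective x this
  intro k k' hkk'
  obtain ⟨y, hy⟩ := exists_ne (x k)
  obtain ⟨z, hl⟩ := exists_isLabelling hy
  refine H.eq_of_kernel_eq fun w w' ↦ ?_
  rw [mApply_eq_mApply_iff_of_eq_nil hl.rotate (hx k) (hc k),
    mApply_eq_mApply_iff_of_eq_nil hl.rotate (hkk' ▸ hx k') (hc k')]

end Erasing

section NonErasing

variable {ι α : Type*}

lemma exists_lt_lt_of_two_lt_card [LinearOrder ι] {s : Finset ι} (hs : 2 < s.card) :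
    ∃ i ∈ s, ∃ j ∈ s, ∃ k ∈ s, i < j ∧ j < k := by
  let f := s.orderEmbOfCardLe hs
  exact ⟨f 0, s.orderEmbOfCardLe_mem hs 0, f 1, s.orderEmbOfCardLe_mem hs 1, f 2,
    s.orderEmbOfCardLe_mem hs 2, f.strictMono (by decide), f.strictMono (by decide)⟩

lemma eq_of_append_comm_of_mApply_eq {n : ℕ} {h : Fin n → List α} (hnil : ∀ l, h l ≠ [])
    {u v : List (Fin n)} (hcomm : u ++ v = v ++ u) (heq : mApply h u = mApply h v) : u = v := by
  wlog hle : u.length ≤ v.length generalizing u v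
  · exact (this hcomm.symm heq.symm (le_of_not_ge hle)).symm
  obtain ⟨z, rfl⟩ := prefix_of_append_eq_append hcomm hle
  cases z with
  | nil => simp
  | cons x z => simp [mApply_append, hnil] at heq

variable [Fintype ι] [LinearOrder ι] {E : ι → List (Fin 3) × List (Fin 3)}
  {h : ι → Fin 3 → List α} {E₀ : List (Fin 3) × List (Fin 3)}

namespace IsSeparating

lemma card_le_of_represents (H : IsSeparating E h) {r p : Fin 3} (hrp : r ≠ p)
    (hperm : E₀.1.Perm E₀.2) (hE₀ : E₀.1 ≠ E₀.2) {μ : ℕ} (hμ : 1 ≤ μ) (hμp : E₀.1.count p ≤ μ)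
    (hsol : ∀ k, IsSolution (h k) E₀)
    (hrep : ∀ k, ∃ D : NormData, Represents (D.assignment r p) (h k)) :
    Fintype.card ι ≤ colourBound μ * 2 := by
  choose D hD using hrep
  obtain ⟨s, t, c, C, hC, hfits⟩ := NormData.exists_forall_fits hrp hperm hE₀ hμ hμp
  replace hfits (k : ι) : (D k).Fits s t c C := hfits _ ((hD k _ _).1 (hsol k))
  by_contra! hcard
  let colour (k : ι) : Fin (colourBound μ) := ⟨(D k).colour c C, (hfits k).colour_lt hC⟩
  obtain ⟨i, hi⟩ := Fintype.exists_lt_card_fiber_of_mul_lt_card colour (by simpa using hcard)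
  obtain ⟨k₁, h₁, k₂, h₂, k₃, h₃, h₁₂, h₂₃⟩ := exists_lt_lt_of_two_lt_card hi
  have colour_eq {k k' : ι} (hk : k ∈ Finset.univ.filter (colour · = i))
      (hk' : k' ∈ Finset.univ.filter (colour · = i)) :
      (D k).colour c C = (D k').colour c C := by
    rw [Finset.mem_filter_univ] at hk hk'
    exact congrArg Fin.val (hk.trans hk'.symm)
  have hne : D k₂ ≠ D k₃ := fun heq ↦
    h₂₃.ne (H.eq_of_represents (hD k₂) (heq ▸ hD k₃))
  exact H.not_isSolution k₁ ((hD k₁ _ _).2 ((hfits k₁).solves_of_colour_eq (hfits k₂) (hfits k₃)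
    (colour_eq h₁ h₂) (colour_eq h₁ h₃) hne ((hD k₂ _ _).1 (H.isSolution h₁₂))
    ((hD k₃ _ _).1 (H.isSolution (h₁₂.trans h₂₃)))))

lemma card_le_of_perm (H : IsSeparating E h) (hc : ∀ k, ¬ IsCommuting (h k))
    (hnil : ∀ k l, h k l ≠ []) (hperm : E₀.1.Perm E₀.2) (hE₀ : E₀.1 ≠ E₀.2) {μ : ℕ} (hμ : 1 ≤ μ)
    (hμp : ∀ p, E₀.1.count p ≤ μ) (hsol : ∀ k, IsSolution (h k) E₀) :
    Fintype.card ι ≤ 6 * (colourBound μ * 2) := by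
  choose r p q D hD using fun k ↦ NormData.exists_isNormalModel
    (hasStandardModel_of_mApply_eq (hnil k) (hc k) hperm hE₀ (hsol k))
  by_contra! hcard
  let roles (k : ι) : {x : Fin 3 × Fin 3 // x.1 ≠ x.2} := ⟨(r k, p k), (hD k).isLabelling.ne₁₂⟩
  obtain ⟨x, hx⟩ := Fintype.exists_lt_card_fiber_of_mul_lt_card roles hcard
  rw [← Fintype.card_subtype] at hx
  refine hx.not_ge ((H.subtype (roles · = x)).card_le_of_represents x.2 hperm hE₀ hμ (hμp _)
    (fun k ↦ hsol k) fun k ↦ ⟨D k, ?_⟩)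
  have hk : (r k, p k) = x := congrArg Subtype.val k.2
  rw [← hk]
  exact (hD k).represents

end IsSeparating

/-- Unbalanced equations are reduced to balanced ones by replacing `u = v` with `uv = vu`. -/
lemma IsSeparating.card_le_of_not_perm (H : IsSeparating E h) (hc : ∀ k, ¬ IsCommuting (h k))
    (hnil : ∀ k l, h k l ≠ []) (hperm : ¬ E₀.1.Perm E₀.2) (hsol : ∀ k, IsSolution (h k) E₀) :
    Fintype.card ι ≤ 3 := by
  obtain ⟨u, v⟩ := E₀
  have hne (k : ι) : u ++ v ≠ v ++ u := fun hcomm ↦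
    hperm (.of_eq (eq_of_append_comm_of_mApply_eq (hnil k) hcomm (hsol k)))
  have hsol' (k : ι) : mApply (h k) (u ++ v) = mApply (h k) (v ++ u) := by
    rw [mApply_append, mApply_append, hsol k]
  choose r p q D hD using fun k ↦ NormData.exists_isNormalModel
    (hasStandardModel_of_mApply_eq (hnil k) (hc k) List.perm_append_comm (hne k) (hsol' k))
  suffices Function.Injective r by simpa using Fintype.card_le_of_injective r this
  intro k k' hr
  have hD' := hD k'
  rw [← hr] at hD'
  obtain ⟨hp, he, hf⟩ := (hD k).eq_of_not_perm hD' hperm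
    (((hD k).represents _ _).1 (hsol k)) ((hD'.represents _ _).1 (hsol k'))
  rw [← hp] at hD'
  obtain ⟨s, t, c, C, -, hfits⟩ := NormData.exists_forall_fits (hD k).isLabelling.ne₁₂
    List.perm_append_comm (hne k) (Nat.le_add_left 1 _) (Nat.le_add_right _ 1)
  have hDD' : D k = D k' :=
    (hfits _ (((hD k).represents _ _).1 (hsol' k))).eq_of_length_eq
      (hfits _ ((hD'.represents _ _).1 (hsol' k'))) he hf
  exact H.eq_of_represents (hD k).represents (hDD' ▸ hD'.represents)

end NonErasing

namespace IsSeparating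

variable {ι α : Type*} [Fintype ι] [LinearOrder ι] {E : ι → List (Fin 3) × List (Fin 3)}
  {h : ι → Fin 3 → List α} {E₀ : List (Fin 3) × List (Fin 3)}

open Classical in
lemma card_le_add (H : IsSeparating E h) {a b : ℕ}
    (ha : Fintype.card {k // IsCommuting (h k)} ≤ a)
    (hb : Fintype.card {k // ¬ IsCommuting (h k) ∧ ∀ l, h k l ≠ []} ≤ b) :
    Fintype.card ι ≤ a + 3 + b := by
  have herase := (H.subtype fun k ↦ ¬ IsCommuting (h k) ∧ ∃ l, h k l = []).card_le_of_erasing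
    (fun k ↦ k.2.1) (fun k ↦ k.2.2)
  rw [Fintype.card_subtype] at ha hb herase
  have hcover : (Finset.univ : Finset ι) ⊆ (Finset.univ.filter fun k ↦ IsCommuting (h k)) ∪
      (Finset.univ.filter fun k ↦ ¬ IsCommuting (h k) ∧ ∃ l, h k l = []) ∪
      Finset.univ.filter fun k ↦ ¬ IsCommuting (h k) ∧ ∀ l, h k l ≠ [] := fun k _ ↦ by
    simp only [Finset.mem_union, Finset.mem_filter_univ, ne_eq, ← not_exists]
    tauto
  calc Fintype.card ι ≤ _ := Finset.card_le_card hcover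
    _ ≤ _ := Finset.card_union_le _ _
    _ ≤ _ := Nat.add_le_add_right (Finset.card_union_le _ _) _
    _ ≤ a + 3 + b := by gcongr

theorem exists_card_le_of_perm (H : IsSeparating E h) (hperm : E₀.1.Perm E₀.2)
    (hE₀ : E₀.1 ≠ E₀.2) (hsol : ∀ k, IsSolution (h k) E₀) :
    ∃ x, Fintype.card ι + 1 ≤ (2 * (E₀.1 ++ E₀.2).count x) ^ 2 + 5 := by
  classical
  obtain ⟨x, hx⟩ := Finite.exists_max fun l ↦ E₀.1.count l
  have hpos : 1 ≤ E₀.1.count x := by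
    obtain ⟨l, hl⟩ := List.exists_mem_of_ne_nil E₀.1 fun hnil ↦ hE₀ (by
      rw [hnil] at hperm ⊢
      exact hperm.nil_eq)
    exact (List.count_pos_iff.2 hl).trans_le (hx l)
  have hcard := H.card_le_add ((H.subtype _).card_le_of_isCommuting fun k ↦ k.2)
    ((H.subtype _).card_le_of_perm (fun k ↦ k.2.1) (fun k ↦ k.2.2) hperm hE₀ hpos hx
      fun k ↦ hsol k)
  refine ⟨x, ?_⟩
  rw [List.count_append, ← hperm.count_eq]
  generalize E₀.1.count x = μ at *
  unfold colourBound at hcard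
  split_ifs at hcard with hμ
  · rw [hμ]
    omega
  · have : 2 ≤ μ := by omega
    nlinarith

theorem exists_card_le_of_not_perm (H : IsSeparating E h) (hperm : ¬ E₀.1.Perm E₀.2)
    (hsol : ∀ k, IsSolution (h k) E₀) :
    ∃ x, Fintype.card ι + 1 ≤ (2 * (E₀.1 ++ E₀.2).count x) ^ 2 + 5 := by
  classical
  obtain ⟨x, hx⟩ := List.exists_mem_of_ne_nil (E₀.1 ++ E₀.2) fun hnil ↦ hperm (by
    rw [(List.append_eq_nil_iff.1 hnil).1, (List.append_eq_nil_iff.1 hnil).2])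
  have hcomm := (H.subtype fun k ↦ IsCommuting (h k)).card_add_one_le_of_isCommuting
    (fun k ↦ k.2) hperm fun k ↦ hsol k
  have hcard := H.card_le_add (Nat.le_sub_one_of_lt hcomm)
    ((H.subtype _).card_le_of_not_perm (fun k ↦ k.2.1) (fun k ↦ k.2.2) hperm fun k ↦ hsol k)
  have hpos := List.count_pos_iff.2 hx
  exact ⟨x, by nlinarith⟩

end IsSeparating

section Chain

variable {α : Type*} {n m : ℕ} {T : Set (Fin n → List α)}

lemma exists_isSeparating_of_chain {eqs : Fin (m + 1) → List (Fin n) × List (Fin n)}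
    (hchain : ∀ k : ℕ, 1 ≤ k → k < m + 1 →
      {h | h ∈ T ∧ ∀ i : Fin (m + 1), (i : ℕ) < k + 1 → mApply h (eqs i).1 = mApply h (eqs i).2}
        ⊂ {h | h ∈ T ∧
            ∀ i : Fin (m + 1), (i : ℕ) < k → mApply h (eqs i).1 = mApply h (eqs i).2}) :
    ∃ h : Fin m → Fin n → List α, (∀ k, IsSolution (h k) (eqs 0)) ∧
      IsSeparating (fun k : Fin m ↦ eqs k.succ) h := by
  choose h hsol hnot using fun k : Fin m ↦
    Set.exists_of_ssubset (hchain (k + 1) (by omega) (by omega))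
  refine ⟨h, fun k ↦ (hsol k).2 0 (by simp), fun j k hjk ↦ (hsol k).2 j.succ ?_, fun k hk ↦ ?_⟩
  · rw [Fin.val_succ]
    exact Nat.succ_lt_succ hjk
  · refine hnot k ⟨(hsol k).1, fun i hi ↦ ?_⟩
    rcases (Nat.lt_succ_iff.1 hi).lt_or_eq with hlt | heq
    · exact (hsol k).2 i hlt
    · rw [show i = k.succ from Fin.ext heq]
      exact hk

end Chain

end WordEq

theorem chain_three_unknowns_bound_general {α : Type*} {m : ℕ} (T : Set (Fin 3 → List α))
    (hm : 0 < m) (eqs : Fin m → List (Fin 3) × List (Fin 3))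
    (hnt : (eqs ⟨0, hm⟩).1 ≠ (eqs ⟨0, hm⟩).2)
    (hchain : ∀ k : ℕ, 1 ≤ k → k < m →
      {h | h ∈ T ∧ ∀ i : Fin m, (i : ℕ) < k + 1 → mApply h (eqs i).1 = mApply h (eqs i).2}
        ⊂ {h | h ∈ T ∧ ∀ i : Fin m, (i : ℕ) < k → mApply h (eqs i).1 = mApply h (eqs i).2}) :
    ∃ x : Fin 3, m ≤ (2 * ((eqs ⟨0, hm⟩).1 ++ (eqs ⟨0, hm⟩).2).count x) ^ 2 + 5 := by
  obtain ⟨m, rfl⟩ := Nat.exists_eq_add_one_of_ne_zero hm.ne'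
  obtain ⟨h, hsol, H⟩ := WordEq.exists_isSeparating_of_chain hchain
  by_cases hperm : (eqs 0).1.Perm (eqs 0).2
  · simpa only [Fintype.card_fin, Fin.zero_eta] using H.exists_card_le_of_perm hperm hnt hsol
  · simpa only [Fintype.card_fin, Fin.zero_eta] using H.exists_card_le_of_not_perm hperm hsol

/-- If `E₁, …, E_m` is a chain of word equations on three unknowns, i.e. a sequence of
nontrivial equations with `Sol(E₁) ⊋ Sol(E₁,E₂) ⊋ ⋯ ⊋ Sol(E₁,…,E_m)`, then there are two
unknowns `x, y` such that `m ≤ (|E₁|_x + |E₁|_y)² + 5`. -/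
theorem chain_three_unknowns_bound {m : ℕ}
    (A : Finset ℕ) (hA : ∀ a ∈ A, 0 < a)
    (hm : 0 < m)
    (eqs : Fin m → List (Fin 3) × List (Fin 3))
    (hnt : ∀ i, (eqs i).1 ≠ (eqs i).2)
    (hchain : ∀ k : ℕ, 1 ≤ k → k < m →
      {h : Fin 3 → List ℕ | IntoAlph A h ∧
          ∀ i : Fin m, (i : ℕ) < k + 1 → mApply h (eqs i).1 = mApply h (eqs i).2}
        ⊂ {h : Fin 3 → List ℕ | IntoAlph A h ∧
            ∀ i : Fin m, (i : ℕ) < k → mApply h (eqs i).1 = mApply h (eqs i).2}) :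
    ∃ x y : Fin 3,
      m ≤ (((eqs ⟨0, hm⟩).1 ++ (eqs ⟨0, hm⟩).2).count x
            + ((eqs ⟨0, hm⟩).1 ++ (eqs ⟨0, hm⟩).2).count y) ^ 2 + 5 := by
  obtain ⟨x, hx⟩ :=
    chain_three_unknowns_bound_general {h | IntoAlph A h} hm eqs (hnt _) hchain
  exact ⟨x, x, by rwa [← two_mul]⟩
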